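/- arXiv:2210.13045 — 2 statements merged into one kernel-verified Lean document; each statement's English description precedes it below -/
import Mathlib

section
/- Let K be a number field, f ∈ O_K[X] monic squarefree of odd degree at least 3, and S a finite set of nonzero primes of O_K such that O := O_{K,S} is a PID. Let A, B, C ∈ O[X] with B² − A·C = f, [A,2B,C] primitive over O[X], and A coprime to f in K[X]. Assume [A,2B,C] is not in the principal genus over K[X], i.e. there exist no ε ∈ Kˣ and p ∈ K[X] with f dividing A − ε·p² in K[X]. Then the set of n ∈ O such that the specialized form [A(n), 2B(n), C(n)] is not GL₂ᵗʷ-equivalent over O to the principal form [1, 0, −f(n)] is infinite. -/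
open Polynomial IsDedekindDomain NumberField

/-- The ring of `S`-integers of a number field `K`. -/
noncomputable abbrev SInt (K : Type*) [Field K] [NumberField K]
    (S : Finset (HeightOneSpectrum (𝓞 K))) : Type _ :=
  ((S : Set (HeightOneSpectrum (𝓞 K))).integer K)

section Aux
open scoped ENNReal
open Filter Topology

/-- formal Euler product -/
noncomputable def eulE {ι : Type*} (w : ι → ℝ≥0∞) : ℝ≥0∞ := ∑' m : Multiset ι, (m.map w).prod

lemma eulE_inj {ι κ : Type*} (g : ι → κ) (hg : Function.Injective g) (w : κ → ℝ≥0∞) :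
    eulE (fun i => w (g i)) ≤ eulE w := by
  unfold eulE
  have := ENNReal.tsum_comp_le_tsum_of_injective (Multiset.map_injective hg) 
    (fun m : Multiset κ => (m.map w).prod)
  refine le_trans (le_of_eq ?_) this
  simp [Multiset.map_map]

lemma eulE_mono {ι : Type*} (w w' : ι → ℝ≥0∞) (h : ∀ i, w i ≤ w' i) : eulE w ≤ eulE w' := by
  unfold eulE
  refine ENNReal.tsum_le_tsum fun m => ?_
  exact Multiset.prod_map_le_prod_map₀ _ _ (fun _ _ => zero_le) (fun i _ => h i)

lemma filterMap_nn {α β : Type*} (m : Multiset α) :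
    Multiset.filterMap (fun _ => (none : Option β)) m = 0 := by
  induction m using Multiset.induction with
  | empty => simp
  | cons a s ih => simpa using ih

lemma sum_multiset_bij (ι κ : Type*) : Function.Bijective
    (fun p : Multiset ι × Multiset κ => p.1.map (Sum.inl : ι → ι ⊕ κ) + p.2.map Sum.inr) := by
  constructor
  · rintro ⟨a, b⟩ ⟨c, d⟩ h
    simp only at h
    have h1 := congrArg (Multiset.filterMap Sum.getLeft?) h
    have h2 := congrArg (Multiset.filterMap Sum.getRight?) h
    have e1 : ((Sum.getLeft? : ι ⊕ κ → Option ι) ∘ Sum.inl) = some := rfl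
    have e2 : ((Sum.getLeft? : ι ⊕ κ → Option ι) ∘ Sum.inr) = fun _ => none := rfl
    have e3 : ((Sum.getRight? : ι ⊕ κ → Option κ) ∘ Sum.inl) = fun _ => none := rfl
    have e4 : ((Sum.getRight? : ι ⊕ κ → Option κ) ∘ Sum.inr) = some := rfl
    simp only [Multiset.filterMap_add, Multiset.filterMap_map, e1, e2, e3, e4, Multiset.filterMap_some, filterMap_nn, add_zero, zero_add] at h1 h2
    rw [h1, h2]
  · intro m
    induction m using Multiset.induction with
    | empty => exact ⟨(0, 0), by simp⟩
    | cons a s ih =>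
      obtain ⟨⟨x, y⟩, hxy⟩ := ih
      rcases a with a | a
      · exact ⟨(a ::ₘ x, y), by simp [← hxy]⟩
      · exact ⟨(x, a ::ₘ y), by simp [← hxy]⟩

lemma eulE_sum {ι κ : Type*} (w : ι ⊕ κ → ℝ≥0∞) :
    eulE w = eulE (fun i => w (Sum.inl i)) * eulE (fun i => w (Sum.inr i)) := by
  unfold eulE
  rw [← (Equiv.ofBijective _ (sum_multiset_bij ι κ)).tsum_eq]
  rw [ENNReal.tsum_prod', ← ENNReal.tsum_mul_right]
  refine tsum_congr fun a => ?_
  rw [← ENNReal.tsum_mul_left]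
  refine tsum_congr fun b => ?_
  simp [Multiset.map_map]

lemma eulE_equiv {ι κ : Type*} (g : ι ≃ κ) (w : κ → ℝ≥0∞) :
    eulE (fun i => w (g i)) = eulE w := by
  refine le_antisymm (eulE_inj g g.injective w) ?_
  have := eulE_inj g.symm g.symm.injective (fun i => w (g i))
  simpa using this

lemma eulE_split {ι : Type*} (p : ι → Prop) (w : ι → ℝ≥0∞) :
    eulE w = eulE (fun i : {i // p i} => w i) * eulE (fun i : {i // ¬ p i} => w i) := by
  classical
  rw [← eulE_equiv (Equiv.sumCompl p) w, eulE_sum]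
  simp

lemma tsum_vec {ι : Type*} (w : ι → ℝ≥0∞) (k : ℕ) :
    ∑' v : Fin k → ι, ∏ i, w (v i) = (∑' i, w i) ^ k := by
  induction k with
  | zero => simp
  | succ k ih =>
    rw [← (Fin.consEquiv (fun _ => ι)).tsum_eq, ENNReal.tsum_prod', pow_succ', ← ih, ← ENNReal.tsum_mul_right]
    refine tsum_congr fun a => ?_
    rw [← ENNReal.tsum_mul_left]
    refine tsum_congr fun b => ?_
    simp [Fin.prod_univ_succ, Fin.consEquiv]

lemma eulE_geom {ι : Type*} (w : ι → ℝ≥0∞) : eulE w ≤ (1 - ∑' i, w i)⁻¹ := by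
  rw [← ENNReal.tsum_geometric]
  have : ∑' n, (∑' i, w i) ^ n = ∑' l : (Σ n, Fin n → ι), ∏ i, w (l.2 i) := by
    rw [ENNReal.tsum_sigma']
    exact tsum_congr fun n => (tsum_vec w n).symm
  rw [this]
  unfold eulE
  have hs : ∀ m : Multiset ι, ∃ l : (Σ n, Fin n → ι), ((List.ofFn l.2 : List ι) : Multiset ι) = m := by
    intro m
    induction m using Quotient.inductionOn with
    | h l => exact ⟨⟨l.length, l.get⟩, by simp⟩
  choose g hg using hs
  have hinj : Function.Injective g := Function.LeftInverse.injective (g := fun l : (Σ n, Fin n → ι) => ((List.ofFn l.2 : List ι) : Multiset ι)) hg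
  refine le_trans (le_of_eq ?_) (ENNReal.tsum_comp_le_tsum_of_injective hinj (fun l : (Σ n, Fin n → ι) => ∏ i, w (l.2 i)))
  refine tsum_congr fun m => ?_
  conv_lhs => rw [← hg m]
  simp [List.prod_ofFn]

lemma eulE_lt_top_of_lt {ι : Type*} (w : ι → ℝ≥0∞) (h : ∑' i, w i < 1) : eulE w < ⊤ := by
  refine lt_of_le_of_lt (eulE_geom w) ?_
  rw [ENNReal.inv_lt_top]
  exact tsub_pos_of_lt h

lemma eulE_finset {ι : Type*} (w : ι → ℝ≥0∞) (h1 : ∀ i, w i < 1) (F : Finset ι) :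
    eulE (fun i : {i // i ∈ F} => w i) < ⊤ := by
  classical
  induction F using Finset.induction with
  | empty => exact eulE_lt_top_of_lt _ (by simp)
  | insert a s ha ih =>
    rw [eulE_split (fun i => i.1 = a)]
    refine ENNReal.mul_lt_top ?_ ?_
    · apply eulE_lt_top_of_lt
      let g : {i : {i // i ∈ insert a s} // i.1 = a} → Unit := fun _ => ()
      have hg : Function.Injective g := by
        rintro ⟨⟨x, _⟩, hx⟩ ⟨⟨y, _⟩, hy⟩ _
        simp at hx hy; simp [hx, hy]
      have := ENNReal.tsum_comp_le_tsum_of_injective hg (fun _ => w a)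
      refine lt_of_le_of_lt ?_ (h1 a)
      rw [tsum_fintype (fun _ : Unit => w a), Fintype.sum_unique] at this
      refine le_trans (le_of_eq ?_) this
      refine tsum_congr fun i => ?_
      rw [i.2]
    · refine lt_of_le_of_lt ?_ ih
      exact eulE_inj (fun i : {i : {i // i ∈ insert a s} // ¬ i.1 = a} => (⟨i.1.1, (Finset.mem_insert.1 i.1.2).resolve_left i.2⟩ : {i // i ∈ s}))
        (by rintro ⟨⟨x, _⟩, hx⟩ ⟨⟨y, _⟩, hy⟩ h; simpa using h) (fun i => w i)

lemma eulE_lt_top {ι : Type*} (w : ι → ℝ≥0∞) (h1 : ∀ i, w i < 1) (hs : ∑' i, w i ≠ ⊤) : eulE w < ⊤ := by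
  classical
  have := ENNReal.tendsto_tsum_compl_atTop_zero hs
  obtain ⟨F, hF⟩ := (this.eventually (gt_mem_nhds (zero_lt_one))).exists
  rw [eulE_split (· ∈ F)]
  exact ENNReal.mul_lt_top (eulE_finset w h1 F) (eulE_lt_top_of_lt _ hF)

noncomputable def wP (L : Type*) [Field L] [NumberField L] (s : ℝ) (P : HeightOneSpectrum (𝓞 L)) : ℝ≥0∞ :=
  ENNReal.ofReal ((Ideal.absNorm P.asIdeal : ℝ) ^ (-s))

noncomputable def idZ (L : Type*) [Field L] [NumberField L] (s : ℝ) : ℝ≥0∞ :=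
  ∑' I : {I : Ideal (𝓞 L) // I ≠ ⊥}, ENNReal.ofReal ((Ideal.absNorm I.1 : ℝ) ^ (-s))

lemma prod_asIdeal_ne {L : Type*} [Field L] [NumberField L] (m : Multiset (HeightOneSpectrum (𝓞 L))) :
    (m.map HeightOneSpectrum.asIdeal).prod ≠ ⊥ := by
  intro h
  have := Multiset.prod_eq_zero_iff.1 h
  obtain ⟨P, _, hP⟩ := Multiset.mem_map.1 this
  exact P.ne_bot hP

lemma ideal_bij (L : Type*) [Field L] [NumberField L] : Function.Bijective
    (fun m : Multiset (HeightOneSpectrum (𝓞 L)) =>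
      (⟨(m.map HeightOneSpectrum.asIdeal).prod, prod_asIdeal_ne m⟩ : {I : Ideal (𝓞 L) // I ≠ ⊥})) := by
  classical
  constructor
  · intro m m' h
    have h : (m.map HeightOneSpectrum.asIdeal).prod = (m'.map HeightOneSpectrum.asIdeal).prod := by
      simpa using h
    have key : ∀ m : Multiset (HeightOneSpectrum (𝓞 L)),
        UniqueFactorizationMonoid.normalizedFactors (m.map HeightOneSpectrum.asIdeal).prod
          = m.map HeightOneSpectrum.asIdeal := by
      intro m
      apply UniqueFactorizationMonoid.normalizedFactors_prod_of_prime
      intro p hp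
      obtain ⟨P, _, rfl⟩ := Multiset.mem_map.1 hp
      exact P.prime
    have := key m
    rw [h, key m'] at this
    refine Multiset.map_injective ?_ this.symm
    intro P Q h
    exact HeightOneSpectrum.ext h
  · rintro ⟨I, hI⟩
    induction I using UniqueFactorizationMonoid.induction_on_prime with
    | h₁ => exact absurd rfl hI
    | h₂ x hx =>
      refine ⟨0, ?_⟩
      have : x = 1 := by simpa using hx
      simp [this]
    | h₃ a p ha hp ih =>
      obtain ⟨m, hm⟩ := ih ha
      have hm : (m.map HeightOneSpectrum.asIdeal).prod = a := by simpa using hm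
      refine ⟨⟨p, Ideal.isPrime_of_prime hp, hp.ne_zero⟩ ::ₘ m, ?_⟩
      simp [hm]

lemma idZ_eq (L : Type*) [Field L] [NumberField L] (s : ℝ) : idZ L s = eulE (wP L s) := by
  unfold idZ eulE
  rw [← (Equiv.ofBijective _ (ideal_bij L)).tsum_eq]
  refine tsum_congr fun m => ?_
  simp only [Equiv.ofBijective_apply]
  induction m using Multiset.induction with
  | empty => simp
  | cons a t ih =>
    simp only [Multiset.map_cons, Multiset.prod_cons, map_mul, Nat.cast_mul]
    rw [Real.mul_rpow (by positivity) (by positivity), ENNReal.ofReal_mul (by positivity), ih]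
    rfl

noncomputable def tz (L : Type*) [Field L] [NumberField L] (s : ℝ) (n : ℕ) : ℝ :=
  if n = 0 then 0 else (Nat.card {I : Ideal (𝓞 L) // Ideal.absNorm I = n} : ℝ) * (n : ℝ) ^ (-s)

lemma tz_nonneg (L : Type*) [Field L] [NumberField L] (s : ℝ) (n : ℕ) : 0 ≤ tz L s n := by
  unfold tz; split_ifs <;> positivity

lemma idZ_eq_tz (L : Type*) [Field L] [NumberField L] (s : ℝ) :
    idZ L s = ∑' n, ENNReal.ofReal (tz L s n) := by
  unfold idZ
  rw [← (Equiv.sigmaFiberEquiv (fun I : {I : Ideal (𝓞 L) // I ≠ ⊥} => Ideal.absNorm I.1)).tsum_eq,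
    ENNReal.tsum_sigma']
  refine tsum_congr fun n => ?_
  have h1 : ∀ c : {I : {I : Ideal (𝓞 L) // I ≠ ⊥} // Ideal.absNorm I.1 = n},
    ENNReal.ofReal ((Ideal.absNorm ((Equiv.sigmaFiberEquiv (fun I : {I : Ideal (𝓞 L) // I ≠ ⊥} => Ideal.absNorm I.1) ⟨n, c⟩).1) : ℝ) ^ (-s)) = ENNReal.ofReal ((n : ℝ) ^ (-s)) := by
    intro c
    simp [Equiv.sigmaFiberEquiv, c.2]
  rw [tsum_congr h1]
  unfold tz
  split_ifs with hn
  · subst hn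
    have : IsEmpty {I : {I : Ideal (𝓞 L) // I ≠ ⊥} // Ideal.absNorm I.1 = 0} :=
      ⟨fun c => c.1.2 (Ideal.absNorm_eq_zero_iff.1 c.2)⟩
    simp
  · have hfin : Finite {I : Ideal (𝓞 L) // Ideal.absNorm I = n} :=
      Ideal.finite_setOfPred_absNorm_eq n
    let e : {I : {I : Ideal (𝓞 L) // I ≠ ⊥} // Ideal.absNorm I.1 = n} ≃ {I : Ideal (𝓞 L) // Ideal.absNorm I = n} :=
      ⟨fun c => ⟨c.1.1, c.2⟩, fun c => ⟨⟨c.1, fun h => hn (by rw [← c.2, h]; simp)⟩, c.2⟩,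
        fun c => rfl, fun c => rfl⟩
    rw [e.tsum_eq (fun _ => ENNReal.ofReal ((n : ℝ) ^ (-s)))]
    have := Fintype.ofFinite {I : Ideal (𝓞 L) // Ideal.absNorm I = n}
    rw [tsum_fintype, ENNReal.ofReal_mul (by positivity)]
    simp

lemma lterm (L : Type*) [Field L] [NumberField L] (s : ℝ) (n : ℕ) :
    LSeries.term (fun n ↦ (Nat.card {I : Ideal (𝓞 L) // Ideal.absNorm I = n} : ℂ)) s n = (tz L s n : ℂ) := by
  unfold tz
  rw [LSeries.term_def]
  split_ifs with h
  · simp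
  · push_cast
    rw [Complex.ofReal_cpow (by positivity), Complex.ofReal_neg, Complex.cpow_neg, div_eq_mul_inv]
    simp

lemma zeta_real (L : Type*) [Field L] [NumberField L] (s : ℝ) :
    dedekindZeta L s = ((∑' n, tz L s n : ℝ) : ℂ) := by
  rw [Complex.ofReal_tsum]
  unfold dedekindZeta LSeries
  exact tsum_congr (lterm L s)

lemma idZ_lim (L : Type*) [Field L] [NumberField L] :
    (∀ᶠ s in 𝓝[>] (1 : ℝ), idZ L s ≠ ⊤) ∧
    ∃ ρ : ℝ, 0 < ρ ∧ Tendsto (fun s : ℝ => (s - 1) * (idZ L s).toReal) (𝓝[>] 1) (𝓝 ρ) := by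
  have h := tendsto_sub_one_mul_dedekindZeta_nhdsGT L
  have hre : Tendsto (fun s : ℝ => (s - 1) * ∑' n, tz L s n) (𝓝[>] 1) (𝓝 (dedekindZeta_residue L)) := by
    have := (Complex.continuous_re.tendsto _).comp h
    simp only [Complex.ofReal_re] at this
    refine this.congr fun s => ?_
    simp only [Function.comp, zeta_real]
    norm_cast
  have hpos := dedekindZeta_residue_pos L
  have hev : ∀ᶠ s in 𝓝[>] (1 : ℝ), Summable (tz L s) := by
    filter_upwards [hre.eventually (lt_mem_nhds hpos)] with s hs
    by_contra hns
    rw [tsum_eq_zero_of_not_summable hns] at hs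
    simp at hs
  have heq : ∀ s, Summable (tz L s) → idZ L s = ENNReal.ofReal (∑' n, tz L s n) := by
    intro s hs
    rw [idZ_eq_tz, ENNReal.ofReal_tsum_of_nonneg (tz_nonneg L s) hs]
  refine ⟨?_, _, hpos, ?_⟩
  · filter_upwards [hev] with s hs
    rw [heq s hs]; exact ENNReal.ofReal_ne_top
  · refine hre.congr' ?_
    filter_upwards [hev] with s hs
    rw [heq s hs, ENNReal.toReal_ofReal (tsum_nonneg (tz_nonneg L s))]

lemma two_primes_aux {R S : Type*} [CommRing R] [CommRing S] [Algebra R S] [IsDomain R]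
    [Module.Finite R S] [Module.Flat R S] (hr : Module.finrank R S = 2) (P : Ideal R) [P.IsPrime]
    (Q Q' : Ideal S) [Q.IsPrime] [Q'.IsPrime] [Q.LiesOver P] [Q'.LiesOver P] (hne : Q ≠ Q') :
    Q.inertiaDeg R = 1 := by
  classical
  have hfin : Finite (P.primesOver S) := (Algebra.QuasiFinite.finite_primesOver P)
  let _ := Fintype.ofFinite (P.primesOver S)
  have h := Ideal.sum_ramification_inertia_eq_finrank (S := S) P
  rw [hr] at h
  let q : P.primesOver S := ⟨Q, ‹_›, ‹_›⟩
  let q' : P.primesOver S := ⟨Q', ‹_›, ‹_›⟩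
  have hqq : q ≠ q' := fun h => hne (congrArg Subtype.val h)
  have hle : ∑ x ∈ ({q, q'} : Finset _), x.1.ramificationIdx R * x.1.inertiaDeg R ≤ 2 := by
    rw [← h]
    exact Finset.sum_le_sum_of_subset (Finset.subset_univ _)
  rw [Finset.sum_pair hqq] at hle
  have h1 : 0 < Q.ramificationIdx R := Ideal.ramificationIdx_pos Q R
  have h2 : 0 < Q.inertiaDeg R := Ideal.inertiaDeg_pos Q R
  have h3 : 0 < Q'.ramificationIdx R := Ideal.ramificationIdx_pos Q' R
  have h4 : 0 < Q'.inertiaDeg R := Ideal.inertiaDeg_pos Q' R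
  change Q.ramificationIdx R * Q.inertiaDeg R + Q'.ramificationIdx R * Q'.inertiaDeg R ≤ 2 at hle
  nlinarith [Nat.mul_pos h3 h4]

lemma bound_fiber (L : Type*) [Field L] [NumberField L] (n : ℕ) :
    ENat.card {P : HeightOneSpectrum (𝓞 L) // Ideal.absNorm (P.asIdeal.under ℤ) = n} ≤
      Module.finrank ℤ (𝓞 L) := by
  classical
  by_cases hE : IsEmpty {P : HeightOneSpectrum (𝓞 L) // Ideal.absNorm (P.asIdeal.under ℤ) = n}
  · rw [(ENat.card_eq_zero_iff_empty _).2 hE]; exact zero_le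
  · rw [not_isEmpty_iff] at hE
    obtain ⟨P, hP⟩ := hE
    have : NeZero P.asIdeal := ⟨P.ne_bot⟩
    have hp : n.Prime := hP ▸ Nat.absNorm_under_prime P.asIdeal
    have hpr : (Ideal.span {(n : ℤ)}).IsPrime := by
      rw [Ideal.span_singleton_prime (by exact_mod_cast hp.ne_zero)]
      exact Nat.prime_iff_prime_int.1 hp
    have hfin : Finite ((Ideal.span {(n : ℤ)}).primesOver (𝓞 L)) :=
      Algebra.QuasiFinite.finite_primesOver _
    let _ := Fintype.ofFinite ((Ideal.span {(n : ℤ)}).primesOver (𝓞 L))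
    have h := Ideal.sum_ramification_inertia_eq_finrank (S := 𝓞 L) (Ideal.span {(n : ℤ)})
    let g : {P : HeightOneSpectrum (𝓞 L) // Ideal.absNorm (P.asIdeal.under ℤ) = n} →
      (Ideal.span {(n : ℤ)}).primesOver (𝓞 L) := fun P =>
        ⟨P.1.asIdeal, P.1.isPrime, by
          have := Int.liesOver_span_absNorm P.1.asIdeal
          rwa [P.2] at this⟩
    have hg : Function.Injective g := by
      intro P Q h
      apply Subtype.ext
      apply HeightOneSpectrum.ext
      exact congrArg Subtype.val h
    have hf2 : Finite {P : HeightOneSpectrum (𝓞 L) // Ideal.absNorm (P.asIdeal.under ℤ) = n} :=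
      Finite.of_injective g hg
    let _ := Fintype.ofFinite {P : HeightOneSpectrum (𝓞 L) // Ideal.absNorm (P.asIdeal.under ℤ) = n}
    rw [ENat.card_eq_coe_fintype_card]
    have h2 := Fintype.card_le_of_injective g hg
    refine Nat.cast_le.2 (h2.trans ?_)
    rw [← h, Fintype.card_eq_sum_ones]
    refine Finset.sum_le_sum fun q _ => ?_
    have := q.2.1
    exact Nat.mul_pos (Ideal.ramificationIdx_pos q.1 ℤ) (Ideal.inertiaDeg_pos q.1 ℤ)

def goodP {L : Type*} [Field L] [NumberField L] (N : ℕ) (P : HeightOneSpectrum (𝓞 L)) : Prop :=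
  (Ideal.absNorm P.asIdeal).Prime ∧ ¬ Ideal.absNorm P.asIdeal ∣ N

lemma absNorm_pos' {L : Type*} [Field L] [NumberField L] (P : HeightOneSpectrum (𝓞 L)) :
    1 < Ideal.absNorm P.asIdeal := by
  have h0 : Ideal.absNorm P.asIdeal ≠ 0 := by
    rw [Ne, Ideal.absNorm_eq_zero_iff]; exact P.ne_bot
  have h1 : Ideal.absNorm P.asIdeal ≠ 1 := by
    rw [Ne, Ideal.absNorm_eq_one_iff]; exact P.isPrime.ne_top
  omega

lemma bad_le {L : Type*} [Field L] [NumberField L] (N : ℕ) (hN : N ≠ 0) (P : HeightOneSpectrum (𝓞 L))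
    (hP : ¬ goodP N P) : wP L 1 P ≤ ENNReal.ofReal (N * ((Ideal.absNorm (P.asIdeal.under ℤ) : ℝ) ^ 2)⁻¹) := by
  unfold wP
  apply ENNReal.ofReal_le_ofReal
  have : NeZero P.asIdeal := ⟨P.ne_bot⟩
  have hp := Nat.absNorm_under_prime P.asIdeal
  have hlo := Int.liesOver_span_absNorm P.asIdeal
  have := P.isPrime
  have hpow := Ideal.absNorm_pow_inertiaDeg (Ideal.span {(Ideal.absNorm (P.asIdeal.under ℤ) : ℤ)}) P.asIdeal
  rw [Int.ideal_span_absNorm_eq_self] at hpow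
  set q := Ideal.absNorm (P.asIdeal.under ℤ) with hq
  set k := P.asIdeal.inertiaDeg ℤ
  have hk : 0 < k := Ideal.inertiaDeg_pos P.asIdeal ℤ
  have hq0 : (0 : ℝ) < q := by exact_mod_cast hp.pos
  have hN1 : (1 : ℝ) ≤ N := by exact_mod_cast Nat.one_le_iff_ne_zero.2 hN
  rw [Real.rpow_neg (by positivity), Real.rpow_one, ← hpow, Nat.cast_pow]
  have key : (q : ℝ) ^ 2 ≤ N * (q : ℝ) ^ k := by
    by_cases hk1 : k = 1
    · have hqq : q = Ideal.absNorm P.asIdeal := by rw [← hpow, hk1, pow_one]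
      have hdvd : q ∣ N := by
        by_contra hnd
        exact hP ⟨hqq ▸ hp, hqq ▸ hnd⟩
      have : (q : ℝ) ≤ N := by exact_mod_cast Nat.le_of_dvd (Nat.pos_of_ne_zero hN) hdvd
      rw [hk1]; nlinarith
    · have h2 : 2 ≤ k := by omega
      have : (q : ℝ) ^ 2 ≤ (q : ℝ) ^ k := pow_le_pow_right₀ (by exact_mod_cast hp.one_le) h2
      have hp' : (0:ℝ) ≤ (q : ℝ) ^ k := by positivity
      nlinarith
  rw [← div_eq_mul_inv, inv_eq_one_div, div_le_div_iff₀ (by positivity) (by positivity)]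
  linarith

lemma bad_sum (L : Type*) [Field L] [NumberField L] (N : ℕ) (hN : N ≠ 0) :
    ∑' P : {P : HeightOneSpectrum (𝓞 L) // ¬ goodP N P}, wP L 1 P ≠ ⊤ := by
  have h1 : ∑' P : {P : HeightOneSpectrum (𝓞 L) // ¬ goodP N P}, wP L 1 P ≤
      ∑' P : HeightOneSpectrum (𝓞 L), ENNReal.ofReal (N * ((Ideal.absNorm (P.asIdeal.under ℤ) : ℝ) ^ 2)⁻¹) := by
    refine le_trans (ENNReal.tsum_le_tsum fun P => bad_le N hN P.1 P.2) ?_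
    exact ENNReal.tsum_comp_le_tsum_of_injective Subtype.val_injective
      (fun P : HeightOneSpectrum (𝓞 L) => ENNReal.ofReal (N * ((Ideal.absNorm (P.asIdeal.under ℤ) : ℝ) ^ 2)⁻¹))
  refine ne_top_of_le_ne_top ?_ h1
  rw [← (Equiv.sigmaFiberEquiv (fun P : HeightOneSpectrum (𝓞 L) => Ideal.absNorm (P.asIdeal.under ℤ))).tsum_eq,
    ENNReal.tsum_sigma']
  have h2 : ∀ n : ℕ, ∑' c : {P : HeightOneSpectrum (𝓞 L) // Ideal.absNorm (P.asIdeal.under ℤ) = n},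
      ENNReal.ofReal (N * ((Ideal.absNorm (((Equiv.sigmaFiberEquiv (fun P : HeightOneSpectrum (𝓞 L) => Ideal.absNorm (P.asIdeal.under ℤ))) ⟨n, c⟩).asIdeal.under ℤ) : ℝ) ^ 2)⁻¹)
      ≤ ENNReal.ofReal (Module.finrank ℤ (𝓞 L) * (N * ((n : ℝ) ^ 2)⁻¹)) := by
    intro n
    have h3 : ∀ c : {P : HeightOneSpectrum (𝓞 L) // Ideal.absNorm (P.asIdeal.under ℤ) = n},
      ENNReal.ofReal (N * ((Ideal.absNorm (((Equiv.sigmaFiberEquiv (fun P : HeightOneSpectrum (𝓞 L) => Ideal.absNorm (P.asIdeal.under ℤ))) ⟨n, c⟩).asIdeal.under ℤ) : ℝ) ^ 2)⁻¹) = ENNReal.ofReal (N * ((n : ℝ) ^ 2)⁻¹) := by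
      intro c
      simp only [Equiv.sigmaFiberEquiv, Equiv.coe_fn_mk, c.2]
    rw [tsum_congr h3, ENNReal.tsum_const, ENNReal.ofReal_mul (p := (Module.finrank ℤ (𝓞 L) : ℝ)) (by positivity)]
    gcongr
    have := bound_fiber L n
    rw [ENNReal.ofReal_natCast]
    exact_mod_cast this
  refine ne_top_of_le_ne_top ?_ (ENNReal.tsum_le_tsum h2)
  rw [← ENNReal.ofReal_tsum_of_nonneg]
  · exact ENNReal.ofReal_ne_top
  · intro n; positivity
  · apply Summable.mul_left
    apply Summable.mul_left
    exact Real.summable_nat_pow_inv.2 (by norm_num)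

lemma split2 {L M : Type*} [Field L] [NumberField L] [Field M] [NumberField M] [Algebra L M]
    (hr : Module.finrank L M = 2) (σ : M ≃ₐ[L] M) (α : 𝓞 L) (β : 𝓞 M)
    (hβ : β ^ 2 = algebraMap (𝓞 L) (𝓞 M) α) (hσ : σ (β : M) = -(β : M))
    (P : HeightOneSpectrum (𝓞 L)) (x : 𝓞 L) (hx : x ^ 2 - α ∈ P.asIdeal)
    (h2 : 2 * α ∉ P.asIdeal) :
    ∃ Q1 Q2 : HeightOneSpectrum (𝓞 M), Q1 ≠ Q2 ∧ Q1.asIdeal.under (𝓞 L) = P.asIdeal ∧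
      Q2.asIdeal.under (𝓞 L) = P.asIdeal ∧ Ideal.absNorm Q1.asIdeal = Ideal.absNorm P.asIdeal ∧
      Ideal.absNorm Q2.asIdeal = Ideal.absNorm P.asIdeal := by
  have hPp := P.isPrime
  obtain ⟨Q, hQp, hQ⟩ := Ideal.exists_ideal_over_prime_of_isIntegral_of_isDomain (S := 𝓞 M) P.asIdeal
    (by rw [(RingHom.injective_iff_ker_eq_bot _).1 (FaithfulSMul.algebraMap_injective (𝓞 L) (𝓞 M))]; exact bot_le)
  have hQo : Q.LiesOver P.asIdeal := ⟨hQ.symm⟩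
  let τ : 𝓞 M ≃ₐ[𝓞 L] 𝓞 M := RingOfIntegers.mapAlgEquiv σ
  have hτ : τ β = -β := by
    apply RingOfIntegers.ext
    exact hσ
  let Q' : Ideal (𝓞 M) := Q.comap τ
  have hQ'p : Q'.IsPrime := Ideal.comap_isPrime τ Q
  have hQ'o : Q'.LiesOver P.asIdeal := Ideal.comap_liesOver (p := P.asIdeal) (Q := Q) τ
  have hne : Q ≠ Q' := by
    intro he
    set y := algebraMap (𝓞 L) (𝓞 M) x with hy
    have hmem : (β - y) * (β + y) ∈ Q := by
      have : algebraMap (𝓞 L) (𝓞 M) (x ^ 2 - α) ∈ Q := by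
        rw [← Ideal.mem_comap, hQ]; exact hx
      have e : (β - y) * (β + y) = - algebraMap (𝓞 L) (𝓞 M) (x ^ 2 - α) := by
        rw [map_sub, map_pow, ← hβ, ← hy]; ring
      rw [e]; exact Q.neg_mem this
    have hτy : τ y = y := τ.commutes x
    have hb2 : 2 * β ∈ Q := by
      have hinv : ∀ z, z ∈ Q → τ z ∈ Q := fun z hz => by
        rw [he] at hz; exact hz
      rcases hQp.mem_or_mem hmem with h | h
      · have h' := hinv _ h
        rw [map_sub, hτ, hτy] at h'
        have := Q.sub_mem h h'
        convert this using 1; ring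
      · have h' := hinv _ h
        rw [map_add, hτ, hτy] at h'
        have := Q.sub_mem h h'
        convert this using 1; ring
    apply h2
    rw [← hQ, Ideal.mem_comap, map_mul, ← hβ, map_ofNat]
    have := Q.mul_mem_left β hb2
    convert this using 1; ring
  have hr' : Module.finrank (𝓞 L) (𝓞 M) = 2 := by
    rw [← IsFractionRing.finrank_eq (𝓞 L) L (𝓞 M) M, hr]
  have i1 := two_primes_aux hr' P.asIdeal Q Q' hne
  have i2 := two_primes_aux hr' P.asIdeal Q' Q hne.symm
  have n1 := Ideal.absNorm_pow_inertiaDeg P.asIdeal Q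
  have n2 := Ideal.absNorm_pow_inertiaDeg P.asIdeal Q'
  rw [i1, pow_one] at n1
  rw [i2, pow_one] at n2
  refine ⟨⟨Q, hQp, ?_⟩, ⟨Q', hQ'p, ?_⟩, ?_, hQ, hQ'o.over.symm, n1.symm, n2.symm⟩
  · exact Ideal.ne_bot_of_liesOver_of_ne_bot P.ne_bot Q
  · exact Ideal.ne_bot_of_liesOver_of_ne_bot P.ne_bot Q'
  · intro h; exact hne (congrArg HeightOneSpectrum.asIdeal h)

/-- analytic contradiction -/
lemma no_full_split {L M : Type*} [Field L] [NumberField L] [Field M] [NumberField M] [Algebra L M]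
    (N : ℕ) (hN : N ≠ 0)
    (h : ∀ P : HeightOneSpectrum (𝓞 L), goodP N P →
      ∃ Q1 Q2 : HeightOneSpectrum (𝓞 M), Q1 ≠ Q2 ∧ Q1.asIdeal.under (𝓞 L) = P.asIdeal ∧
      Q2.asIdeal.under (𝓞 L) = P.asIdeal ∧ Ideal.absNorm Q1.asIdeal = Ideal.absNorm P.asIdeal ∧
      Ideal.absNorm Q2.asIdeal = Ideal.absNorm P.asIdeal) : False := by
  choose! Q1 Q2 hne hu1 hu2 hn1 hn2 using h
  set C := eulE (fun P : {P : HeightOneSpectrum (𝓞 L) // ¬ goodP N P} => wP L 1 P) with hC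
  have hCtop : C < ⊤ := by
    apply eulE_lt_top _ _ (bad_sum L N hN)
    intro P
    unfold wP
    rw [ENNReal.ofReal_lt_one]
    have := absNorm_pos' P.1
    rw [Real.rpow_neg (by positivity), Real.rpow_one]
    exact inv_lt_one_of_one_lt₀ (by exact_mod_cast this)
  have main : ∀ s : ℝ, 1 < s → idZ L s ^ 2 ≤ idZ M s * C ^ 2 := by
    intro s hs
    rw [idZ_eq, idZ_eq, eulE_split (goodP N) (wP L s), mul_pow]
    refine mul_le_mul' ?_ (pow_le_pow_left' ?_ 2)
    · let g : {P : HeightOneSpectrum (𝓞 L) // goodP N P} ⊕ {P : HeightOneSpectrum (𝓞 L) // goodP N P} →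
        HeightOneSpectrum (𝓞 M) := Sum.elim (fun P => Q1 P.1 P.2) (fun P => Q2 P.1 P.2)
      have hg : Function.Injective g := by
        have hPP : ∀ P P' : {P : HeightOneSpectrum (𝓞 L) // goodP N P}, P.1.asIdeal = P'.1.asIdeal → P = P' :=
          fun P P' h => Subtype.ext (HeightOneSpectrum.ext h)
        rintro (P | P) (P' | P') hh
        · have hh : Q1 P.1 P.2 = Q1 P'.1 P'.2 := hh
          rw [hPP P P' (by rw [← hu1 _ P.2, ← hu1 _ P'.2, hh])]
        · have hh : Q1 P.1 P.2 = Q2 P'.1 P'.2 := hh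
          have e := hPP P P' (by rw [← hu1 _ P.2, ← hu2 _ P'.2, hh])
          subst e
          exact absurd hh (hne _ P.2)
        · have hh : Q2 P.1 P.2 = Q1 P'.1 P'.2 := hh
          have e := hPP P P' (by rw [← hu2 _ P.2, ← hu1 _ P'.2, hh])
          subst e
          exact absurd hh.symm (hne _ P.2)
        · have hh : Q2 P.1 P.2 = Q2 P'.1 P'.2 := hh
          rw [hPP P P' (by rw [← hu2 _ P.2, ← hu2 _ P'.2, hh])]
      have := eulE_inj g hg (wP M s)
      rw [eulE_sum] at this
      refine le_trans (le_of_eq ?_) this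
      rw [sq]
      congr 2
      · funext P; simp only [g, Sum.elim_inl, wP, hn1 _ P.2]
      · funext P; simp only [g, Sum.elim_inr, wP, hn2 _ P.2]
    · apply eulE_mono
      intro P
      unfold wP
      apply ENNReal.ofReal_le_ofReal
      have := absNorm_pos' P.1
      exact Real.rpow_le_rpow_of_exponent_le (by exact_mod_cast this.le) (by linarith)
  obtain ⟨tL, ρ, hρ, limL⟩ := idZ_lim L
  obtain ⟨tM, ρ', hρ', limM⟩ := idZ_lim M
  have l1 : Tendsto (fun s : ℝ => ((s - 1) * (idZ L s).toReal) ^ 2) (𝓝[>] 1) (𝓝 (ρ ^ 2)) := limL.pow 2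
  have l0 : Tendsto (fun s : ℝ => s - 1) (𝓝[>] 1) (𝓝 0) := by
    have : Tendsto (fun s : ℝ => s - 1) (𝓝 1) (𝓝 (1 - 1)) := (continuous_id.sub continuous_const).tendsto 1
    rw [sub_self] at this
    exact this.mono_left nhdsWithin_le_nhds
  have l2 : Tendsto (fun s : ℝ => (s - 1) * ((s - 1) * (idZ M s).toReal) * (C.toReal) ^ 2) (𝓝[>] 1)
      (𝓝 (0 * ρ' * C.toReal ^ 2)) := (l0.mul limM).mul_const _
  have : ρ ^ 2 ≤ 0 * ρ' * C.toReal ^ 2 := by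
    refine le_of_tendsto_of_tendsto l1 l2 ?_
    filter_upwards [tL, tM, self_mem_nhdsWithin] with s h1 h2 hs
    have hm := ENNReal.toReal_mono (ENNReal.mul_ne_top h2 (ENNReal.pow_ne_top hCtop.ne)) (main s hs)
    rw [ENNReal.toReal_mul, ENNReal.toReal_pow, ENNReal.toReal_pow] at hm
    nlinarith [sq_nonneg (s - 1)]
  nlinarith [sq_pos_of_pos hρ]

lemma cheb {L : Type*} [Field L] [NumberField L] (α : 𝓞 L) (hα : ∀ b : L, b ^ 2 ≠ (α : L)) (N : ℕ)
    (hN : N ≠ 0) : ∃ P : Ideal (𝓞 L), P.IsPrime ∧ (Ideal.absNorm P).Prime ∧ ¬ Ideal.absNorm P ∣ N ∧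
      ∀ x : 𝓞 L, x ^ 2 - α ∉ P := by
  by_contra hcon
  push Not at hcon
  have hirr : Irreducible (X ^ 2 - C (α : L)) := X_pow_sub_C_irreducible_of_prime Nat.prime_two hα
  have : Fact (Irreducible (X ^ 2 - C (α : L))) := ⟨hirr⟩
  let M := AdjoinRoot (X ^ 2 - C (α : L))
  have hmon : (X ^ 2 - C (α : L)).Monic := monic_X_pow_sub_C _ two_ne_zero
  let pb := AdjoinRoot.powerBasis hirr.ne_zero
  have : Module.Finite L M := pb.finite
  have : NumberField M := NumberField.of_module_finite L M
  have hr : Module.finrank L M = 2 := by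
    rw [pb.finrank, AdjoinRoot.powerBasis_dim, natDegree_X_pow_sub_C]
  let b : M := AdjoinRoot.root (X ^ 2 - C (α : L))
  have hb : b ^ 2 = algebraMap L M α := by
    have := AdjoinRoot.eval₂_root (X ^ 2 - C (α : L))
    simp only [eval₂_sub, eval₂_pow, eval₂_X, eval₂_C] at this
    exact sub_eq_zero.1 this
  have hbi : IsIntegral ℤ b := by
    refine IsIntegral.of_pow (n := 2) (by norm_num) ?_
    rw [hb]
    exact α.isIntegral_coe.algebraMap
  let β : 𝓞 M := ⟨b, hbi⟩
  have hβ : β ^ 2 = algebraMap (𝓞 L) (𝓞 M) α := RingOfIntegers.ext hb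
  have hev : eval₂ ((Algebra.ofId L M : L →ₐ[L] M) : L →+* M) (-b) (X ^ 2 - C (α : L)) = 0 := by
    simp only [eval₂_sub, eval₂_pow, eval₂_X, eval₂_C]
    rw [neg_sq, hb]; exact sub_self _
  let σ0 : M →ₐ[L] M := AdjoinRoot.liftAlgHom _ (Algebra.ofId L M) (-b) hev
  let σ : M ≃ₐ[L] M := AlgEquiv.ofBijective σ0 (Algebra.IsAlgebraic.algHom_bijective σ0)
  have hσ : σ b = -b := by
    change σ0 b = -b
    exact AdjoinRoot.lift_root hev
  have hα0 : (2 * α) ≠ 0 := by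
    intro h
    have : α = 0 := by simpa using h
    exact hα 0 (by rw [this]; simp)
  refine no_full_split (L := L) (M := M) (N * Ideal.absNorm (Ideal.span {2 * α})) (mul_ne_zero hN ?_) ?_
  · rw [Ne, Ideal.absNorm_eq_zero_iff, Ideal.span_singleton_eq_bot]; exact hα0
  · rintro P ⟨hp, hpN⟩
    obtain ⟨x, hx⟩ := hcon P.asIdeal P.isPrime hp (fun h => hpN (h.mul_right _))
    refine split2 hr σ α β hβ hσ P x hx ?_
    intro h2
    apply hpN
    refine Dvd.dvd.mul_left ?_ _
    exact Ideal.absNorm_dvd_absNorm_of_le ((Ideal.span_singleton_le_iff_mem _).2 h2)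

lemma clear_den (K : Type*) [Field K] [NumberField K] (S : Finset (HeightOneSpectrum (𝓞 K))) :
    ∃ N : ℕ, N ≠ 0 ∧ ∀ x : (S : Set (HeightOneSpectrum (𝓞 K))).integer K, ∃ k : ℕ, ∃ y : 𝓞 K,
      (y : K) = (N : K) ^ k * (x : K) := by
  classical
  refine ⟨∏ v ∈ S, Ideal.absNorm v.asIdeal, ?_, ?_⟩
  · rw [Finset.prod_ne_zero_iff]
    intro v _
    rw [Ne, Ideal.absNorm_eq_zero_iff]
    exact v.ne_bot
  · set N := ∏ v ∈ S, Ideal.absNorm v.asIdeal with hN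
    have hN0 : N ≠ 0 := by
      rw [hN, Finset.prod_ne_zero_iff]
      intro v _
      rw [Ne, Ideal.absNorm_eq_zero_iff]
      exact v.ne_bot
    have hle : ∀ v : HeightOneSpectrum (𝓞 K), v.valuation K (N : K) ≤ 1 := by
      intro v
      have := v.valuation_le_one (K := K) ((N : ℕ) : 𝓞 K)
      simpa using this
    have hne : ∀ v : HeightOneSpectrum (𝓞 K), v.valuation K (N : K) ≠ 0 := by
      intro v
      rw [Valuation.ne_zero_iff]
      exact_mod_cast hN0
    intro x
    have h1 : ∀ v ∈ S, ∃ k : ℕ, v.valuation K (x : K) ≤ ((v.valuation K (N : K))⁻¹) ^ k := by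
      intro v hv
      apply MulArchimedean.arch
      rw [one_lt_inv₀ (zero_lt_iff.2 (hne v))]
      have : v.valuation K (algebraMap (𝓞 K) K ((N : ℕ) : 𝓞 K)) < 1 := by
        rw [HeightOneSpectrum.valuation_lt_one_iff_mem]
        have h2 := Ideal.absNorm_mem v.asIdeal
        obtain ⟨c, hc⟩ : Ideal.absNorm v.asIdeal ∣ N := Finset.dvd_prod_of_mem _ hv
        rw [hc, Nat.cast_mul]
        exact Ideal.mul_mem_right _ _ h2
      simpa using this
    choose! k hk using h1
    refine ⟨∑ v ∈ S, k v, ?_⟩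
    have := HeightOneSpectrum.mem_integers_of_valuation_le_one (R := 𝓞 K) K
      ((N : K) ^ (∑ v ∈ S, k v) * (x : K)) ?_
    · exact this
    · intro v
      rw [map_mul, map_pow]
      by_cases hv : v ∈ S
      · have h3 : k v ≤ ∑ v ∈ S, k v := Finset.single_le_sum (f := k) (fun _ _ => Nat.zero_le _) hv
        have h4 : v.valuation K (N : K) ^ (∑ v ∈ S, k v) ≤ v.valuation K (N : K) ^ (k v) :=
          pow_le_pow_right_of_le_one' (hle v) h3
        have h5 := hk v hv
        calc _ ≤ v.valuation K (N : K) ^ (k v) * ((v.valuation K (N : K))⁻¹) ^ (k v) :=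
              mul_le_mul' h4 h5
          _ = 1 := by rw [← mul_pow, mul_inv_cancel₀ (hne v), one_pow]
      · have h6 := x.2 v (by simpa using hv)
        exact mul_le_one' (pow_le_one' (hle v) _) h6

lemma units_fg (K : Type*) [Field K] [NumberField K] (S : Finset (HeightOneSpectrum (𝓞 K))) :
    Module.Finite ℤ (Additive ((S : Set (HeightOneSpectrum (𝓞 K))).integer K)ˣ) := by
  classical
  let O := (S : Set (HeightOneSpectrum (𝓞 K))).integer K
  let ι : Oˣ →* Kˣ := Units.map (O.val : O →* K)
  let φ : Oˣ →* (S → Multiplicative ℤ) := MonoidHom.pi fun v => (v.1.valuationOfNeZero (K := K)).comp ι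
  let ψ : (𝓞 K)ˣ →* Oˣ := Units.map (algebraMap (𝓞 K) O : 𝓞 K →* O)
  let φ' : Additive Oˣ →+ (S → ℤ) :=
    { toFun := fun x v => Multiplicative.toAdd (φ x.toMul v)
      map_zero' := by funext v; simp
      map_add' := by intro x y; funext v; simp }
  let F : Additive Oˣ →ₗ[ℤ] (S → ℤ) := φ'.toIntLinearMap
  let G : Additive (𝓞 K)ˣ →ₗ[ℤ] Additive Oˣ := (MonoidHom.toAdditive ψ).toIntLinearMap
  have hker : LinearMap.ker F ≤ LinearMap.range G := by
    intro x hx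
    have hx1 : ∀ v : HeightOneSpectrum (𝓞 K), v ∈ S → v.valuation K ((x.toMul : O) : K) = 1 := by
      intro v hv
      have h1 : F x = 0 := hx
      have h2 : Multiplicative.toAdd (v.valuationOfNeZero (K := K) (ι x.toMul)) = 0 := congrFun h1 ⟨v, hv⟩
      have h3 : v.valuationOfNeZero (K := K) (ι x.toMul) = 1 := h2
      have h4 := v.valuationOfNeZero_eq (K := K) (ι x.toMul)
      rw [h3] at h4
      exact h4.symm
    have hu : ((x.toMul : O) : K) * (((x.toMul)⁻¹ : Oˣ) : O) = 1 := by
      have : (x.toMul : O) * (((x.toMul)⁻¹ : Oˣ) : O) = 1 := Units.mul_inv _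
      exact_mod_cast congrArg (fun z : O => (z : K)) this
    have hx2 : ∀ v : HeightOneSpectrum (𝓞 K), v ∈ S → v.valuation K ((((x.toMul)⁻¹ : Oˣ) : O) : K) = 1 := by
      intro v hv
      have h1 := congrArg (v.valuation K) hu
      rw [map_mul, hx1 v hv, one_mul, map_one] at h1
      exact h1
    obtain ⟨a, ha⟩ := HeightOneSpectrum.mem_integers_of_valuation_le_one (R := 𝓞 K) K ((x.toMul : O) : K) (by
      intro v
      by_cases hv : v ∈ S
      · exact (hx1 v hv).le
      · exact (x.toMul : O).2 v (by simpa using hv))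
    obtain ⟨b, hb⟩ := HeightOneSpectrum.mem_integers_of_valuation_le_one (R := 𝓞 K) K ((((x.toMul)⁻¹ : Oˣ) : O) : K) (by
      intro v
      by_cases hv : v ∈ S
      · exact (hx2 v hv).le
      · exact (((x.toMul)⁻¹ : Oˣ) : O).2 v (by simpa using hv))
    have hab : a * b = 1 := by
      apply FaithfulSMul.algebraMap_injective (𝓞 K) K
      rw [map_mul, ha, hb, hu, map_one]
    refine ⟨Additive.ofMul (Units.mkOfMulEqOne a b hab), ?_⟩
    apply Additive.toMul.injective
    apply Units.ext
    apply Subtype.ext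
    exact ha
  have : Module.Finite ℤ (LinearMap.range G) := inferInstance
  have hfin : (LinearMap.ker F).FG := by
    have h1 : IsNoetherian ℤ (LinearMap.range G) := isNoetherian_of_isNoetherianRing_of_finite ℤ _
    have := (isNoetherian_submodule.1 h1) (LinearMap.ker F) hker
    exact this
  constructor
  refine Submodule.fg_of_fg_map_of_fg_inf_ker F ?_ ?_
  · exact IsNoetherian.noetherian _
  · rw [top_inf_eq]; exact hfin

lemma units_mod_sq (K : Type*) [Field K] [NumberField K] (S : Finset (HeightOneSpectrum (𝓞 K))) :
    ∃ T : Finset ((S : Set (HeightOneSpectrum (𝓞 K))).integer K)ˣ,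
      ∀ u : ((S : Set (HeightOneSpectrum (𝓞 K))).integer K)ˣ, ∃ t ∈ T,
        ∃ w : ((S : Set (HeightOneSpectrum (𝓞 K))).integer K)ˣ, u = t * w ^ 2 := by
  classical
  let O := (S : Set (HeightOneSpectrum (𝓞 K))).integer K
  have hfg : Module.Finite ℤ (Additive Oˣ) := units_fg K S
  let D : Submodule ℤ (Additive Oˣ) := LinearMap.range (LinearMap.lsmul ℤ (Additive Oˣ) 2)
  have hfin : Finite (Additive Oˣ ⧸ D) := by
    apply Module.finite_of_fg_torsion
    intro x
    obtain ⟨y, rfl⟩ := Submodule.Quotient.mk_surjective _ x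
    refine ⟨⟨2, by simp⟩, ?_⟩
    change (2 : ℤ) • (Submodule.Quotient.mk y : Additive Oˣ ⧸ D) = 0
    rw [← Submodule.Quotient.mk_smul, Submodule.Quotient.mk_eq_zero]
    exact ⟨y, rfl⟩
  have := Fintype.ofFinite (Additive Oˣ ⧸ D)
  refine ⟨Finset.univ.image fun q : Additive Oˣ ⧸ D => (Quotient.out q).toMul, ?_⟩
  intro u
  refine ⟨_, Finset.mem_image_of_mem _ (Finset.mem_univ (Submodule.Quotient.mk (Additive.ofMul u))), ?_⟩
  set q : Additive Oˣ ⧸ D := Submodule.Quotient.mk (Additive.ofMul u) with hq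
  have h1 : (Submodule.Quotient.mk (Quotient.out q) : Additive Oˣ ⧸ D) = Submodule.Quotient.mk (Additive.ofMul u) := by
    rw [← hq]; exact Quotient.out_eq q
  have h2 := (Submodule.Quotient.eq D).1 h1.symm
  obtain ⟨w, hw⟩ := h2
  refine ⟨w.toMul, ?_⟩
  have h3 : (2 : ℤ) • w = Additive.ofMul u - Quotient.out q := hw
  have h4 : Additive.ofMul u = Quotient.out q + (2 : ℕ) • w := by
    rw [← natCast_zsmul]; push_cast; rw [h3]; abel
  exact congrArg Additive.toMul h4

lemma crt_ind {ι : Type*} (T : Finset ι) (Bad : ι → ℤ → Prop)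
    (h : ∀ i ∈ T, ∀ N : ℕ, N ≠ 0 → ∃ q : ℕ, q.Prime ∧ ¬ q ∣ N ∧ ∃ m : ℤ, ∀ n : ℤ, n ≡ m [ZMOD q] → Bad i n) :
    ∃ Q : ℕ, Q ≠ 0 ∧ ∃ m : ℤ, ∀ n : ℤ, n ≡ m [ZMOD Q] → ∀ i ∈ T, Bad i n := by
  classical
  induction T using Finset.induction_on with
  | empty => exact ⟨1, one_ne_zero, 0, by simp⟩
  | insert i T hi ih =>
    obtain ⟨Q, hQ, m, hm⟩ := ih fun j hj => h j (Finset.mem_insert_of_mem hj)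
    obtain ⟨q, hq, hqQ, m', hm'⟩ := h i (Finset.mem_insert_self _ _) Q hQ
    have hc : IsCoprime (q : ℤ) (Q : ℤ) :=
      Nat.isCoprime_iff_coprime.2 ((Nat.Prime.coprime_iff_not_dvd hq).2 hqQ)
    obtain ⟨u, v, huv⟩ := hc
    refine ⟨Q * q, mul_ne_zero hQ hq.ne_zero, u * q * m + v * Q * m', ?_⟩
    intro n hn j hj
    push_cast at hn
    have h1 : n ≡ m [ZMOD Q] := by
      have := (Int.modEq_iff_dvd.1 (hn.of_mul_right _))
      rw [Int.modEq_iff_dvd]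
      obtain ⟨c, hc⟩ := this
      exact ⟨c - v * (m' - m), by linear_combination hc - m * huv⟩
    have h2 : n ≡ m' [ZMOD q] := by
      have := (Int.modEq_iff_dvd.1 (hn.of_mul_left _))
      rw [Int.modEq_iff_dvd]
      obtain ⟨c, hc⟩ := this
      exact ⟨c - u * (m - m'), by linear_combination hc - m' * huv⟩
    rcases Finset.mem_insert.1 hj with rfl | hj
    · exact hm' n h2
    · exact hm n h1 j hj

lemma crt_sq {K : Type*} [Field K] (a F : K[X]) : Squarefree F →
    (∀ g, Irreducible g → g ∣ F → ∃ p, g ∣ a - p ^ 2) → ∃ p, F ∣ a - p ^ 2 := by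
  induction F using UniqueFactorizationMonoid.induction_on_prime with
  | h₁ => intro h; exact absurd h not_squarefree_zero
  | h₂ x hx => exact fun _ _ => ⟨0, hx.dvd⟩
  | h₃ b q hb hq ih =>
    intro hsq h
    obtain ⟨p2, hp2⟩ := ih (hsq.of_mul_right) fun g hg hgb => h g hg (hgb.mul_left _)
    obtain ⟨p1, hp1⟩ := h q hq.irreducible (dvd_mul_right _ _)
    have hc : IsCoprime q b := by
      rw [hq.irreducible.coprime_iff_not_dvd]
      rintro ⟨c, rfl⟩
      exact hq.not_isUnit (hsq q ⟨c, by ring⟩)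
    have hc' := hc
    obtain ⟨u, v, huv⟩ := hc
    refine ⟨u * q * p2 + v * b * p1, ?_⟩
    apply hc'.mul_dvd
    · obtain ⟨c, hc⟩ := hp1
      obtain ⟨d, hd⟩ : q ∣ (u * q * p2 + v * b * p1) - p1 :=
        ⟨u * (p2 - p1), by linear_combination p1 * huv⟩
      have e : u * q * p2 + v * b * p1 = p1 + q * d := by linear_combination hd
      rw [e]
      exact ⟨c - 2 * p1 * d - q * d ^ 2, by linear_combination hc⟩
    · obtain ⟨c, hc⟩ := hp2
      obtain ⟨d, hd⟩ : b ∣ (u * q * p2 + v * b * p1) - p2 :=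
        ⟨v * (p1 - p2), by linear_combination p2 * huv⟩
      have e : u * q * p2 + v * b * p1 = p2 + b * d := by linear_combination hd
      rw [e]
      exact ⟨c - 2 * p2 * d - b * d ^ 2, by linear_combination hc⟩

lemma sqfree_map {K : Type*} [Field K] [NumberField K] (f : (𝓞 K)[X]) (hf : f.Monic) (h : Squarefree f) :
    Squarefree (f.map (algebraMap (𝓞 K) K)) := by
  classical
  have hf0 : f.map (algebraMap (𝓞 K) K) ≠ 0 := (hf.map _).ne_zero
  rw [squarefree_iff_irreducible_sq_not_dvd_of_ne_zero hf0]
  intro g hg hgf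
  set g1 := normalize g with hg1
  have hmon : g1.Monic := monic_normalize hg.ne_zero
  have hass : Associated g1 g := normalize_associated g
  have hdvd : g1 * g1 ∣ f.map (algebraMap (𝓞 K) K) := (hass.mul_mul hass).dvd.trans hgf
  obtain ⟨g', hg'⟩ := IsIntegrallyClosed.eq_map_mul_C_of_dvd K hf ((dvd_mul_right g1 g1).trans hdvd)
  rw [hmon.leadingCoeff, C_1, mul_one] at hg'
  have hinj : Function.Injective (algebraMap (𝓞 K) K) := FaithfulSMul.algebraMap_injective _ _
  have hmon' : g'.Monic := by
    rw [← hg'] at hmon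
    exact monic_of_injective hinj hmon
  have h2 : g' * g' ∣ f := by
    rw [← Polynomial.map_dvd_map _ hinj (hmon'.mul hmon'), Polynomial.map_mul, hg']
    exact hdvd
  have hu := h g' h2
  have : IsUnit g1 := by
    rw [← hg']
    exact hu.map (Polynomial.mapRingHom (algebraMap (𝓞 K) K))
  exact hg.not_isUnit (hass.isUnit this)

lemma local_obs1 {K L : Type*} [Field K] [NumberField K] [Field L] [NumberField L] [Algebra K L]
    (f a : (𝓞 K)[X]) (hf : f.Monic) (θ : L) (hθ : aeval θ (f.map (algebraMap (𝓞 K) K)) = 0)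
    (hns : ∀ b : L, b ^ 2 ≠ aeval θ (a.map (algebraMap (𝓞 K) K))) (N : ℕ) (hN : N ≠ 0) :
    ∃ q : ℕ, q.Prime ∧ ¬ q ∣ N ∧ ∃ m : ℤ, ∀ n : ℤ, n ≡ m [ZMOD q] → ∀ c : ℕ, ¬ q ∣ c →
      ∀ R T : 𝓞 K, (c : 𝓞 K) ^ 2 * a.eval (n : 𝓞 K) ≠ R ^ 2 - f.eval (n : 𝓞 K) * T ^ 2 := by
  have hint : IsIntegral ℤ θ := by
    have : IsIntegral (𝓞 K) θ := by
      refine ⟨f, hf, ?_⟩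
      rw [aeval_map_algebraMap] at hθ
      exact hθ
    exact isIntegral_trans θ this
  let θ' : 𝓞 L := ⟨θ, hint⟩
  have hcoe : ∀ p : (𝓞 K)[X], ((eval₂ (algebraMap (𝓞 K) (𝓞 L)) θ' p : 𝓞 L) : L) =
      aeval θ (p.map (algebraMap (𝓞 K) K)) := by
    intro p
    have h1 := Polynomial.hom_eval₂ p (algebraMap (𝓞 K) (𝓞 L)) (algebraMap (𝓞 L) L) θ'
    rw [← IsScalarTower.algebraMap_eq] at h1
    rw [aeval_map_algebraMap]
    exact h1
  set α := eval₂ (algebraMap (𝓞 K) (𝓞 L)) θ' a with hα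
  have hf0 : eval₂ (algebraMap (𝓞 K) (𝓞 L)) θ' f = 0 := by
    apply RingOfIntegers.ext
    rw [hcoe f, hθ]; rfl
  obtain ⟨P, hP, hq, hqN, hx⟩ := cheb α (by intro b; rw [hcoe a]; exact hns b) N hN
  set q := Ideal.absNorm P with hqdef
  have hcard : Nat.card (𝓞 L ⧸ P) = q := rfl
  have : Fact q.Prime := ⟨hq⟩
  have hq0 : ((q : ℕ) : 𝓞 L ⧸ P) = 0 := by
    have := Ideal.absNorm_mem P
    rw [← Ideal.Quotient.eq_zero_iff_mem] at this
    simpa using this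
  have hne : (1 : 𝓞 L ⧸ P) ≠ 0 := by
    have : Nontrivial (𝓞 L ⧸ P) := Ideal.Quotient.nontrivial_iff.2 hP.ne_top
    exact one_ne_zero
  let π := Ideal.Quotient.mk P
  obtain ⟨m, hm⟩ := mem_zmultiples_of_prime_card (p := q) hcard hne (g' := π θ')
  simp only [zsmul_eq_mul, mul_one] at hm
  refine ⟨q, hq, hqN, m, ?_⟩
  intro n hn c hc R T heq
  have hnm : ((n : ℤ) : 𝓞 L ⧸ P) = π θ' := by
    obtain ⟨d, hd⟩ := Int.modEq_iff_dvd.1 hn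
    rw [← hm]
    have : m = n + q * d := by linarith
    rw [this]; push_cast; rw [hq0]; ring
  let ρ : 𝓞 K →+* 𝓞 L ⧸ P := π.comp (algebraMap (𝓞 K) (𝓞 L))
  have hev : ∀ p : (𝓞 K)[X], ρ (p.eval (n : 𝓞 K)) = π (eval₂ (algebraMap (𝓞 K) (𝓞 L)) θ' p) := by
    intro p
    rw [Polynomial.hom_eval₂, ← Polynomial.eval₂_at_apply, map_intCast, hnm]
  have h1 := congrArg ρ heq
  simp only [map_sub, map_mul, map_pow, hev, hf0, map_zero, zero_mul, sub_zero, map_natCast] at h1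
  obtain ⟨u, v, huv⟩ : IsCoprime (q : ℤ) (c : ℤ) :=
    Nat.isCoprime_iff_coprime.2 ((Nat.Prime.coprime_iff_not_dvd hq).2 hc)
  have hv : (v : 𝓞 L ⧸ P) * (c : 𝓞 L ⧸ P) = 1 := by
    have := congrArg (fun z : ℤ => (z : 𝓞 L ⧸ P)) huv
    push_cast at this
    rw [hq0] at this
    linear_combination this
  apply hx ((v : 𝓞 L) * algebraMap (𝓞 K) (𝓞 L) R)
  rw [← Ideal.Quotient.eq_zero_iff_mem]
  simp only [map_sub, map_mul, map_pow, map_intCast]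
  change (v : 𝓞 L ⧸ P) ^ 2 |> fun z => ((v : 𝓞 L ⧸ P) * ρ R) ^ 2 - π α = 0
  change (c : 𝓞 L ⧸ P) ^ 2 * π α = (ρ R) ^ 2 at h1
  linear_combination (-(v : 𝓞 L ⧸ P) ^ 2) * h1 + (π α) * ((v : 𝓞 L ⧸ P) * (c : 𝓞 L ⧸ P) + 1) * hv

lemma local_obs {K : Type*} [Field K] [NumberField K]
    (f a : (𝓞 K)[X]) (hf : f.Monic) (hsq : Squarefree f)
    (hns : ¬ ∃ p : K[X], f.map (algebraMap (𝓞 K) K) ∣ a.map (algebraMap (𝓞 K) K) - p ^ 2)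
    (N : ℕ) (hN : N ≠ 0) :
    ∃ q : ℕ, q.Prime ∧ ¬ q ∣ N ∧ ∃ m : ℤ, ∀ n : ℤ, n ≡ m [ZMOD q] → ∀ c : ℕ, ¬ q ∣ c →
      ∀ R T : 𝓞 K, (c : 𝓞 K) ^ 2 * a.eval (n : 𝓞 K) ≠ R ^ 2 - f.eval (n : 𝓞 K) * T ^ 2 := by
  obtain ⟨g, hg, hgf, hgn⟩ : ∃ g : K[X], Irreducible g ∧ g ∣ f.map (algebraMap (𝓞 K) K) ∧
      ∀ p, ¬ g ∣ a.map (algebraMap (𝓞 K) K) - p ^ 2 := by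
    by_contra hcon
    push Not at hcon
    exact hns (crt_sq _ _ (sqfree_map f hf hsq) hcon)
  have : Fact (Irreducible g) := ⟨hg⟩
  have : Module.Finite K (AdjoinRoot g) := (AdjoinRoot.powerBasis hg.ne_zero).finite
  have : NumberField (AdjoinRoot g) := NumberField.of_module_finite K (AdjoinRoot g)
  refine local_obs1 (L := AdjoinRoot g) f a hf (AdjoinRoot.root g) ?_ ?_ N hN
  · rw [AdjoinRoot.aeval_eq, AdjoinRoot.mk_eq_zero]
    exact hgf
  · intro b hb
    obtain ⟨p, rfl⟩ := AdjoinRoot.mk_surjective b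
    rw [AdjoinRoot.aeval_eq] at hb
    apply hgn p
    rw [← AdjoinRoot.mk_eq_zero, map_sub, map_pow, hb, sub_self]

lemma clear_poly {K : Type*} [Field K] [NumberField K] (S : Finset (HeightOneSpectrum (𝓞 K)))
    (N : ℕ) (hN : ∀ x : (SInt K S), ∃ k : ℕ, ∃ y : 𝓞 K,
      (y : K) = (N : K) ^ k * (x : K)) (Q : (SInt K S)[X]) :
    ∃ k : ℕ, ∃ a : (𝓞 K)[X], a.map (algebraMap (𝓞 K) K) =
      Polynomial.C ((N : K) ^ k) * Q.map (algebraMap (SInt K S) K) := by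
  induction Q using Polynomial.induction_on' with
  | add p q hp hq =>
    obtain ⟨k, a, ha⟩ := hp
    obtain ⟨l, b, hb⟩ := hq
    refine ⟨k + l, Polynomial.C ((N : 𝓞 K) ^ l) * a + Polynomial.C ((N : 𝓞 K) ^ k) * b, ?_⟩
    simp only [Polynomial.map_add, Polynomial.map_mul, ha, hb, Polynomial.map_C, map_pow, map_natCast,
      Polynomial.map_pow, Polynomial.map_natCast]
    ring
  | monomial n x =>
    obtain ⟨k, y, hy⟩ := hN x
    refine ⟨k, Polynomial.monomial n y, ?_⟩
    rw [Polynomial.map_monomial, Polynomial.map_monomial, Polynomial.C_mul_monomial]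
    exact congrArg _ hy

lemma unit_obs {K : Type*} [Field K] [NumberField K] (S : Finset (HeightOneSpectrum (𝓞 K)))
    (f : (𝓞 K)[X]) (hf : f.Monic) (hsq : Squarefree f)
    (A : (SInt K S)[X])
    (hgenus : ¬ ∃ ε : K, ε ≠ 0 ∧ ∃ p : K[X],
        (f.map (algebraMap (𝓞 K) K)) ∣
          (A.map (algebraMap (SInt K S) K) - Polynomial.C ε * p ^ 2))
    (t : (SInt K S)) (ht : t ≠ 0) (N : ℕ) (hN : N ≠ 0) :
    ∃ q : ℕ, q.Prime ∧ ¬ q ∣ N ∧ ∃ m : ℤ, ∀ n : ℤ, n ≡ m [ZMOD q] →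
      ∀ R T : (SInt K S),
        t * A.eval (n : (SInt K S)) ≠ R ^ 2 -
          (f.map (algebraMap (𝓞 K) (SInt K S))).eval
            (n : (SInt K S)) * T ^ 2 := by
  obtain ⟨N0, hN0, hclr⟩ := clear_den K S
  have hinjK : Function.Injective (algebraMap (𝓞 K) K) := FaithfulSMul.algebraMap_injective _ _
  have hinjO : Function.Injective (algebraMap (SInt K S) K) := Subtype.val_injective
  obtain ⟨k, a0, ha0⟩ := clear_poly S N0 hclr (Polynomial.C t * A)
  have hN0K : (N0 : K) ≠ 0 := by exact_mod_cast hN0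
  have htK : algebraMap (SInt K S) K t ≠ 0 := by
    rw [Ne, map_eq_zero_iff _ hinjO]; exact ht
  set a : (𝓞 K)[X] := Polynomial.C ((N0 : 𝓞 K) ^ k) * a0 with ha
  have hamap : a.map (algebraMap (𝓞 K) K) =
      Polynomial.C ((N0 : K) ^ (2 * k) * algebraMap (SInt K S) K t) * A.map (algebraMap (SInt K S) K) := by
    rw [ha, Polynomial.map_mul, ha0, Polynomial.map_mul, Polynomial.map_C, Polynomial.map_C, map_pow,
      map_natCast, two_mul, pow_add, C_mul, C_mul]
    ring
  have hns : ¬ ∃ p : K[X], f.map (algebraMap (𝓞 K) K) ∣ a.map (algebraMap (𝓞 K) K) - p ^ 2 := by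
    rintro ⟨p, hp⟩
    set e : K := (N0 : K) ^ (2 * k) * algebraMap (SInt K S) K t with he
    have he0 : e ≠ 0 := mul_ne_zero (pow_ne_zero _ hN0K) htK
    refine hgenus ⟨e⁻¹, inv_ne_zero he0, p, ?_⟩
    rw [hamap] at hp
    have h1 : A.map (algebraMap (SInt K S) K) - Polynomial.C e⁻¹ * p ^ 2 =
        Polynomial.C e⁻¹ * (Polynomial.C e * A.map (algebraMap (SInt K S) K) - p ^ 2) := by
      rw [mul_sub, ← mul_assoc, ← C_mul, inv_mul_cancel₀ he0, C_1, one_mul]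
    rw [h1]
    exact hp.mul_left _
  obtain ⟨q, hq, hqN, m, hm⟩ := local_obs f a hf hsq hns (N * N0) (mul_ne_zero hN hN0)
  refine ⟨q, hq, fun h => hqN (h.mul_right _), m, ?_⟩
  intro n hn R T heq
  obtain ⟨i, R', hR'⟩ := hclr R
  obtain ⟨j, T', hT'⟩ := hclr T
  refine hm n hn (N0 ^ (i + j)) ?_ ((N0 : 𝓞 K) ^ (k + j) * R') ((N0 : 𝓞 K) ^ (k + i) * T') ?_
  · intro h
    exact hqN ((hq.dvd_of_dvd_pow h).mul_left _)
  · apply hinjK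
    have h1 := congrArg (algebraMap (SInt K S) K) heq
    have h2 : ∀ p : (𝓞 K)[X], algebraMap (𝓞 K) K (p.eval (n : 𝓞 K)) =
        (p.map (algebraMap (𝓞 K) K)).eval (n : K) := by
      intro p
      have := Polynomial.eval_map_apply (f := algebraMap (𝓞 K) K) (p := p) (n : 𝓞 K)
      rw [map_intCast] at this
      exact this.symm
    have h3 : ∀ p : (SInt K S)[X], algebraMap (SInt K S) K (p.eval (n : (SInt K S))) =
        (p.map (algebraMap (SInt K S) K)).eval (n : K) := by
      intro p
      have := Polynomial.eval_map_apply (f := algebraMap (SInt K S) K) (p := p) (n : (SInt K S))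
      rw [map_intCast] at this
      exact this.symm
    have h4 : (f.map (algebraMap (𝓞 K) (SInt K S))).map (algebraMap (SInt K S) K) = f.map (algebraMap (𝓞 K) K) := by
      rw [Polynomial.map_map]; rfl
    have hR2 : algebraMap (𝓞 K) K R' = (N0 : K) ^ i * algebraMap (SInt K S) K R := hR'
    have hT2 : algebraMap (𝓞 K) K T' = (N0 : K) ^ j * algebraMap (SInt K S) K T := hT'
    simp only [map_mul, map_sub, map_pow, h3, h4] at h1
    simp only [map_mul, map_sub, map_pow, map_natCast, h2, hamap, C_mul, C_pow, eval_pow, eval_natCast, C_eq_natCast, hR2, hT2, eval_mul, eval_C, Nat.cast_pow]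
    linear_combination ((N0 : K) ^ (2 * k + 2 * i + 2 * j)) * h1

end Aux

/-- **Infinitely many non-trivial specializations.**
`K` a number field, `f ∈ O_K[X]` monic squarefree of odd degree `≥ 3`, `S` a
finite set of primes with `O = O_{K,S}` a PID. Let `[A,2B,C]` be a primitive
form over `O[X]` with `B² − AC = f` and `A` coprime to `f` in `K[X]`, which is
not in the principal genus over `K[X]` (no `ε ∈ Kˣ`, `p ∈ K[X]` satisfy
`f ∣ A − ε·p²`). Then there are infinitely many `n ∈ O` such that the
specialized form `[A(n), 2B(n), C(n)]` is not `GL₂ᵗʷ`-equivalent over `O` to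
the principal form `[1, 0, −f(n)]`. -/
theorem infinitely_many_nontrivial_specializations
    (K : Type*) [Field K] [NumberField K]
    (S : Finset (HeightOneSpectrum (𝓞 K)))
    (hPID : IsPrincipalIdealRing (SInt K S))
    (f : Polynomial (𝓞 K)) (hmonic : f.Monic) (hsqfree : Squarefree f)
    (hodd : Odd f.natDegree) (hdeg : 3 ≤ f.natDegree)
    (A B C : Polynomial (SInt K S))
    (hrel : B ^ 2 - A * C = f.map (algebraMap (𝓞 K) (SInt K S)))
    (hprim : Ideal.span {A, 2 * B, C} = (⊤ : Ideal (Polynomial (SInt K S))))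
    (hcop : IsCoprime (A.map (algebraMap (SInt K S) K)) (f.map (algebraMap (𝓞 K) K)))
    (hgenus : ¬ ∃ ε : K, ε ≠ 0 ∧ ∃ p : K[X],
        (f.map (algebraMap (𝓞 K) K)) ∣
          (A.map (algebraMap (SInt K S) K) - Polynomial.C ε * p ^ 2)) :
    {n : SInt K S |
      ¬ ∃ M : Matrix (Fin 2) (Fin 2) (SInt K S), IsUnit M.det ∧
        ∀ x y : SInt K S,
          M.det * (A.eval n * x ^ 2 + 2 * B.eval n * x * y + C.eval n * y ^ 2) =
            (M 0 0 * x + M 0 1 * y) ^ 2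
              - (f.map (algebraMap (𝓞 K) (SInt K S))).eval n
                * (M 1 0 * x + M 1 1 * y) ^ 2}.Infinite := by
  obtain ⟨T, hT⟩ := units_mod_sq K S
  obtain ⟨Q, hQ, m, hm⟩ := crt_ind T (fun t n => ∀ R W : SInt K S,
        (t : SInt K S) * A.eval (n : SInt K S) ≠ R ^ 2 -
          (f.map (algebraMap (𝓞 K) (SInt K S))).eval (n : SInt K S) * W ^ 2)
    (fun t _ N hN => unit_obs S f hmonic hsqfree A hgenus (t : SInt K S) t.ne_zero N hN)
  refine Set.infinite_of_injective_forall_mem (f := fun j : ℤ => ((m + Q * j : ℤ) : SInt K S)) ?_ ?_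
  · intro i j hij
    have h1 := congrArg (algebraMap (SInt K S) K) hij
    simp only [map_intCast] at h1
    have h2 : m + Q * i = m + Q * j := by exact_mod_cast h1
    have h3 : (Q : ℤ) ≠ 0 := by exact_mod_cast hQ
    exact mul_left_cancel₀ h3 (add_left_cancel h2)
  · intro j
    rintro ⟨M, ⟨u, hu⟩, hM⟩
    have hcong : m + Q * j ≡ m [ZMOD Q] := by
      rw [Int.modEq_iff_dvd]
      exact ⟨-j, by ring⟩
    obtain ⟨t, htT, w, hw⟩ := hT u
    have hM1 := hM 1 0
    rw [← hu, hw] at hM1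
    have hwi : (w : SInt K S) * ((w⁻¹ : (SInt K S)ˣ) : SInt K S) = 1 := Units.mul_inv w
    refine hm _ hcong t htT (((w⁻¹ : (SInt K S)ˣ) : SInt K S) * M 0 0)
      (((w⁻¹ : (SInt K S)ˣ) : SInt K S) * M 1 0) ?_
    push_cast at hM1 ⊢
    set z : SInt K S := ((w⁻¹ : (SInt K S)ˣ) : SInt K S) with hz
    set n : SInt K S := (m : SInt K S) + (Q : SInt K S) * (j : SInt K S) with hn
    linear_combination z ^ 2 * hM1 - (t : SInt K S) * A.eval n * ((w : SInt K S) * z + 1) * hwi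
end

section
/- Let K be a number field, f ∈ O_K[X] monic squarefree of odd degree at least 3, and S a finite set of nonzero primes of O_K such that O := O_{K,S} is a PID; let δ be a density on O. Let A, B, C ∈ O[X] with B² − A·C = f, [A,2B,C] primitive over O[X], A coprime to f in K[X], and assume there exist no ε ∈ Kˣ and p ∈ K[X] with f dividing A − ε·p² in K[X]. Let E ⊆ Oˣ be a finite set of representatives of Oˣ/(Oˣ)², and for each ε ∈ E let ρ_ε be a root of f in a fixed algebraic closure K̄ such that ε·A(ρ_ε) is not a square in K(ρ_ε) (such roots exist); let P_ε be the set of nonzero prime ideals 𝔭 of the ring of integers of K(ρ_ε) such that 𝔭 does not lie above any prime of S, 𝔭 has residue (inertia) degree 1 over K, and the residue of ε·A(ρ_ε) modulo 𝔭 is a nonzero nonsquare in the residue field. Then δ(T_triv) ≤ Σ_{ε ∈ E} inf_F ∏_{𝔭 ∈ F} (1 − 1/N(𝔭)), where the infimum is over finite subsets F of P_ε, N(𝔭) is the cardinality of the residue field of 𝔭, and T_triv := {n ∈ O : [A(n), 2B(n), C(n)] is GL₂ᵗʷ-equivalent over O to [1, 0, −f(n)]}. -/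
open Polynomial IntermediateField IsDedekindDomain NumberField

set_option maxHeartbeats 4000000
set_option synthInstance.maxHeartbeats 1000000

/-- `O_{K,S}` acts on any intermediate field of `K̄/K` through `K`. -/
noncomputable instance (K : Type*) [Field K] [NumberField K]
    (S : Finset (HeightOneSpectrum (𝓞 K))) (L : IntermediateField K (AlgebraicClosure K)) :
    Algebra (SInt K S) L :=
  ((algebraMap K L).comp (algebraMap (SInt K S) K)).toAlgebra

namespace DB

/-- weight of an ideal -/
noncomputable def wt {F : Type*} [Field F] [NumberField F] (s : ℝ) (I : Ideal (𝓞 F)) : ℝ :=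
  (Ideal.absNorm I : ℝ) ^ (-s)

section
variable {F : Type*} [Field F] [NumberField F]

lemma wt_nonneg (s : ℝ) (I : Ideal (𝓞 F)) : 0 ≤ wt s I := by unfold wt; positivity

lemma wt_mul (s : ℝ) (I J : Ideal (𝓞 F)) : wt s (I * J) = wt s I * wt s J := by
  unfold wt
  rw [map_mul, Nat.cast_mul, Real.mul_rpow (by positivity) (by positivity)]

lemma wt_one (s : ℝ) : wt s (1 : Ideal (𝓞 F)) = 1 := by
  unfold wt; simp

/-- `wt s` as a monoid hom -/
noncomputable def wtHom (s : ℝ) : Ideal (𝓞 F) →* ℝ where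
  toFun := wt s
  map_one' := wt_one s
  map_mul' := wt_mul s

lemma lseries_summable {s : ℝ} (hs : 1 < s) :
    LSeriesSummable (fun n ↦ ((Nat.card {I : Ideal (𝓞 F) // Ideal.absNorm I = n} : ℝ) : ℂ)) (s:ℂ) := by
  refine LSeriesSummable_of_sum_norm_bigO_and_nonneg (r := 1)
    (f := fun n ↦ (Nat.card {I : Ideal (𝓞 F) // Ideal.absNorm I = n} : ℝ)) ?_
    (fun _ ↦ Nat.cast_nonneg _) zero_le_one (by simpa using hs)
  have h := ((Ideal.tendsto_norm_le_div_atTop₀ F).comp tendsto_natCast_atTop_atTop).isBigO_one ℝ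
  have h2 := h.mul (Asymptotics.isBigO_refl (fun n : ℕ ↦ (n:ℝ)) Filter.atTop)
  refine (h2.congr' ?_ ?_)
  · filter_upwards [Filter.eventually_gt_atTop 0] with n hn
    have hn' : (n:ℝ) ≠ 0 := by positivity
    simp only [Function.comp_apply, Nat.cast_le, ← Nat.cast_sum]
    rw [div_mul_cancel₀ _ hn']
    congr 1
    rw [← add_left_inj 1, ← Ideal.card_norm_le_eq_card_norm_le_add_one,
      show Finset.Icc 1 n = Finset.Ioc 0 n from Finset.Icc_succ_left_eq_Ioc _ _,
      show 1 = Nat.card {I : Ideal (𝓞 F) // Ideal.absNorm I = 0} by simp [Ideal.absNorm_eq_zero_iff],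
      Finset.sum_Ioc_add_eq_sum_Icc (n.zero_le),
      ← Finset.card_preimage_eq_sum_card_image_eq (fun k _ ↦ Ideal.finite_setOfPred_absNorm_eq k)]
    simp [Set.coe_eq_subtype]
  · filter_upwards with n
    simp

lemma wt_hasSum {s : ℝ} (hs : 1 < s) :
    HasSum (fun I : Ideal (𝓞 F) ↦ wt s I) (dedekindZeta F s).re := by
  have h0 := LSeriesSummable.LSeriesHasSum (lseries_summable (F := F) hs)
  have h1 := Complex.hasSum_re h0
  have h2 : (fun n : ℕ ↦ (LSeries.term (fun n ↦ ((Nat.card {I : Ideal (𝓞 F) // Ideal.absNorm I = n} : ℝ) : ℂ)) (s:ℂ) n).re)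
    = fun n : ℕ ↦ (Nat.card {I : Ideal (𝓞 F) // Ideal.absNorm I = n} : ℝ) * (n:ℝ) ^ (-s) := by
    funext n
    rcases Nat.eq_zero_or_pos n with rfl | hn
    · have : (0:ℝ) ^ (-s) = 0 := Real.zero_rpow (by linarith)
      simp [this]
    · rw [LSeries.term_of_ne_zero hn.ne', Real.rpow_neg (by positivity), ← div_eq_mul_inv]
      have : ((n:ℂ) ^ (s:ℂ)) = (((n:ℝ) ^ s : ℝ) : ℂ) := by
        rw [Complex.ofReal_cpow (by positivity)]; simp
      rw [this, ← Complex.ofReal_div, Complex.ofReal_re]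
  rw [h2] at h1
  have h3 : ∀ n : ℕ, HasSum (fun I : {I : Ideal (𝓞 F) // Ideal.absNorm I = n} ↦ wt s I.1)
      ((Nat.card {I : Ideal (𝓞 F) // Ideal.absNorm I = n} : ℝ) * (n:ℝ) ^ (-s)) := by
    intro n
    have : Finite {I : Ideal (𝓞 F) // Ideal.absNorm I = n} := Ideal.finite_setOfPred_absNorm_eq n
    have := Fintype.ofFinite {I : Ideal (𝓞 F) // Ideal.absNorm I = n}
    have := hasSum_fintype (fun I : {I : Ideal (𝓞 F) // Ideal.absNorm I = n} ↦ wt s I.1)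
    convert this using 1
    rw [Finset.sum_congr rfl (g := fun _ ↦ (n:ℝ)^(-s)) (fun I _ ↦ by unfold wt; rw [I.2])]
    simp
  have hsum : Summable (fun x : (Σ n : ℕ, {I : Ideal (𝓞 F) // Ideal.absNorm I = n}) ↦ wt s x.2.1) := by
    rw [summable_sigma_of_nonneg (fun x ↦ wt_nonneg _ _)]
    refine ⟨fun n ↦ (h3 n).summable, ?_⟩
    refine h1.summable.congr fun n ↦ ?_
    exact (h3 n).tsum_eq.symm
  have h4 := (Equiv.sigmaFiberEquiv (fun I : Ideal (𝓞 F) ↦ Ideal.absNorm I)).hasSum_iff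
    (f := fun I : Ideal (𝓞 F) ↦ wt s I) (a := (dedekindZeta F s).re)
  rw [← h4]
  have h5 := hsum.hasSum
  have h6 := h5.sigma (fun n ↦ h3 n)
  have := h6.unique h1
  rw [this] at h5
  exact h5

lemma one_sub_inv_le {x : ℝ} (h1 : x ≤ 1/2) : (1 - x)⁻¹ ≤ Real.exp (x + 2 * x^2) := by
  have h : 1 + (x + 2*x^2) ≤ Real.exp (x + 2 * x^2) := by linarith [Real.add_one_le_exp (x + 2 * x^2)]
  rw [inv_le_iff_one_le_mul₀ (by linarith)]
  have : 0 ≤ x^2 * (1 - 2*x) := by apply mul_nonneg <;> nlinarith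
  nlinarith

lemma exp_le_one_add {x : ℝ} (h0 : 0 ≤ x) : Real.exp (x - x^2) ≤ 1 + x := by
  have h : 1 + (x^2 - x) ≤ Real.exp (x^2 - x) := by linarith [Real.add_one_le_exp (x^2 - x)]
  have : Real.exp (x - x^2) = (Real.exp (x^2-x))⁻¹ := by rw [← Real.exp_neg]; ring_nf
  rw [this, inv_le_iff_one_le_mul₀ (Real.exp_pos _)]
  have : 0 ≤ x^3 := by positivity
  nlinarith

/-- lower Euler bound -/
lemma lower {s : ℝ} (hs : 1 < s) (G : Finset (Ideal (𝓞 F))) (hG : ∀ P ∈ G, Prime P) :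
    Real.exp (∑ P ∈ G, (wt s P - wt s P ^ 2)) ≤ (dedekindZeta F s).re := by
  classical
  rw [Real.exp_sum]
  calc ∏ P ∈ G, Real.exp (wt s P - wt s P ^ 2) ≤ ∏ P ∈ G, (1 + wt s P) :=
        Finset.prod_le_prod (fun _ _ ↦ (Real.exp_pos _).le) (fun P _ ↦ exp_le_one_add (wt_nonneg _ _))
    _ = ∑ H ∈ G.powerset, ∏ P ∈ H, wt s P := Finset.prod_one_add G
    _ = ∑ H ∈ G.powerset, wt s (∏ P ∈ H, P) := by
        refine Finset.sum_congr rfl fun H _ ↦ ?_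
        exact (map_prod (wtHom s) (fun P ↦ P) H).symm
    _ = ∑ I ∈ G.powerset.image (fun H ↦ ∏ P ∈ H, P), wt s I := by
        rw [Finset.sum_image]
        intro H1 h1 H2 h2 h12
        have key : ∀ H ∈ G.powerset, UniqueFactorizationMonoid.normalizedFactors (∏ P ∈ H, P) = H.val := by
          intro H hH
          have := UniqueFactorizationMonoid.normalizedFactors_prod_of_prime (m := H.val)
            (fun p hp ↦ hG p (Finset.mem_powerset.1 hH hp))
          rwa [Finset.prod_val] at this
        apply Finset.val_injective
        rw [← key H1 h1, ← key H2 h2]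
        exact congrArg _ h12
    _ ≤ _ := sum_le_hasSum _ (fun _ _ ↦ wt_nonneg _ _) (wt_hasSum hs)

lemma wt_le_half {s : ℝ} (hs : 1 < s) {P : Ideal (𝓞 F)} (hP : Prime P) : wt s P ≤ 1/2 := by
  have h2 : 2 ≤ Ideal.absNorm P := by
    have h0 : Ideal.absNorm P ≠ 0 := by
      rw [Ne, Ideal.absNorm_eq_zero_iff]; exact hP.ne_zero
    have h1 : Ideal.absNorm P ≠ 1 := by
      rw [Ne, Ideal.absNorm_eq_one_iff]
      intro h; exact hP.not_isUnit (Ideal.isUnit_iff.2 h)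
    omega
  unfold wt
  rw [Real.rpow_neg (by positivity), one_div]
  apply inv_anti₀ (by norm_num)
  calc (2:ℝ) ≤ (Ideal.absNorm P : ℝ) := by exact_mod_cast h2
    _ = (Ideal.absNorm P : ℝ)^(1:ℝ) := by simp
    _ ≤ _ := Real.rpow_le_rpow_of_exponent_le (by exact_mod_cast (by omega : 1 ≤ Ideal.absNorm P)) hs.le

lemma sum_prod_le {α ι : Type*} (w : α → ℝ) (hw : ∀ a, 0 ≤ w a) (T : Finset ι)
    (e : ι → α → ℕ) (G : Finset α) (k : ℕ)
    (hinj : ∀ I ∈ T, ∀ J ∈ T, (∀ P ∈ G, e I P = e J P) → I = J)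
    (hle : ∀ I ∈ T, ∀ P, e I P ≤ k) :
    ∑ I ∈ T, ∏ P ∈ G, w P ^ e I P ≤ ∏ P ∈ G, ∑ j ∈ Finset.range (k+1), w P ^ j := by
  classical
  calc ∑ I ∈ T, ∏ P ∈ G, w P ^ e I P = ∑ I ∈ T, ∏ x ∈ G.attach, w x.1 ^ e I x.1 := by
        refine Finset.sum_congr rfl fun I hI ↦ ?_
        exact (Finset.prod_attach G (fun P ↦ w P ^ e I P)).symm
    _ = ∑ q ∈ T.image (fun I ↦ (fun (P : α) (_ : P ∈ G) ↦ e I P)),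
          ∏ x ∈ G.attach, w x.1 ^ q x.1 x.2 := by
        rw [Finset.sum_image]
        intro I hI J hJ hIJ
        exact hinj I hI J hJ fun P hP ↦ congrFun (congrFun hIJ P) hP
    _ ≤ ∑ q ∈ G.pi (fun _ ↦ Finset.range (k+1)), ∏ x ∈ G.attach, w x.1 ^ q x.1 x.2 := by
        apply Finset.sum_le_sum_of_subset_of_nonneg
        · intro q hq
          obtain ⟨I, hI, rfl⟩ := Finset.mem_image.1 hq
          rw [Finset.mem_pi]
          intro P hP
          rw [Finset.mem_range, Nat.lt_succ_iff]
          exact hle I hI P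
        · intro _ _ _
          exact Finset.prod_nonneg fun x _ ↦ pow_nonneg (hw _) _
    _ = ∏ P ∈ G, ∑ j ∈ Finset.range (k+1), w P ^ j :=
        (Finset.prod_sum G (fun _ ↦ Finset.range (k+1)) (fun P j ↦ w P ^ j)).symm

/-- upper Euler bound -/
lemma upper {s : ℝ} (hs : 1 < s) {c : ℝ}
    (hc : ∀ G : Finset (Ideal (𝓞 F)), (∀ P ∈ G, Prime P) →
      Real.exp (∑ P ∈ G, (wt s P + 2 * wt s P ^ 2)) ≤ c) :
    (dedekindZeta F s).re ≤ c := by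
  classical
  refine hasSum_le_of_sum_le (wt_hasSum hs) fun T ↦ ?_
  set T' := T.filter (· ≠ ⊥)
  have hT' : ∑ I ∈ T, wt s I = ∑ I ∈ T', wt s I := by
    symm
    apply Finset.sum_subset (Finset.filter_subset _ _)
    intro I hI hI'
    have : I = ⊥ := by
      by_contra h; exact hI' (Finset.mem_filter.2 ⟨hI, h⟩)
    unfold wt
    rw [this]; simp
    exact Real.zero_rpow (by linarith)
  rw [hT']
  let nf : Ideal (𝓞 F) → Multiset (Ideal (𝓞 F)) := UniqueFactorizationMonoid.normalizedFactors
  set G : Finset (Ideal (𝓞 F)) := T'.biUnion fun I ↦ (nf I).toFinset with hGdef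
  have hG : ∀ P ∈ G, Prime P := by
    intro P hP
    rw [hGdef, Finset.mem_biUnion] at hP
    obtain ⟨I, _, hI⟩ := hP
    exact UniqueFactorizationMonoid.prime_of_normalized_factor P (Multiset.mem_toFinset.1 hI)
  set k : ℕ := T'.sup fun I ↦ Multiset.card (nf I) with hk
  have hfac : ∀ I ∈ T', I = ∏ P ∈ G, P ^ (nf I).count P := by
    intro I hI
    have hI0 : I ≠ 0 := (Finset.mem_filter.1 hI).2
    have h1 := UniqueFactorizationMonoid.prod_normalizedFactors_eq hI0
    rw [normalize_eq] at h1
    conv_lhs => rw [← h1]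
    exact Finset.prod_multiset_count_of_subset _ _ 
      (Finset.subset_biUnion_of_mem (fun I ↦ (nf I).toFinset) hI)
  calc ∑ I ∈ T', wt s I = ∑ I ∈ T', ∏ P ∈ G, wt s P ^ (nf I).count P := by
        refine Finset.sum_congr rfl fun I hI ↦ ?_
        conv_lhs => rw [hfac I hI]
        rw [show wt s (∏ P ∈ G, P ^ (nf I).count P) = wtHom s (∏ P ∈ G, P ^ (nf I).count P) from rfl,
          map_prod]
        exact Finset.prod_congr rfl fun P _ ↦ map_pow _ _ _
    _ ≤ ∏ P ∈ G, ∑ j ∈ Finset.range (k+1), wt s P ^ j := by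
        refine sum_prod_le (wt s) (wt_nonneg s) T' (fun I P ↦ (nf I).count P) G k ?_ ?_
        · intro I hI J hJ hIJ
          rw [hfac I hI, hfac J hJ]
          exact Finset.prod_congr rfl fun P hP ↦ by rw [hIJ P hP]
        · intro I hI P
          exact (Multiset.count_le_card _ _).trans
            (Finset.le_sup (f := fun I ↦ Multiset.card (nf I)) hI)
    _ ≤ ∏ P ∈ G, Real.exp (wt s P + 2 * wt s P ^ 2) := by
        refine Finset.prod_le_prod (fun P _ ↦ Finset.sum_nonneg fun j _ ↦ pow_nonneg (wt_nonneg _ _) _) 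
          fun P hP ↦ ?_
        have hh := wt_le_half hs (hG P hP)
        refine le_trans ?_ (one_sub_inv_le hh)
        exact sum_le_hasSum _ (fun _ _ ↦ pow_nonneg (wt_nonneg _ _) _)
          (hasSum_geometric_of_lt_one (wt_nonneg s P) (by linarith))
    _ = Real.exp (∑ P ∈ G, (wt s P + 2 * wt s P ^ 2)) := (Real.exp_sum _ _).symm
    _ ≤ c := hc G hG

end
end DB

namespace DB
section
variable {F : Type*} [Field F] [NumberField F]

lemma two_le_absNorm {P : Ideal (𝓞 F)} (hP : Prime P) : 2 ≤ Ideal.absNorm P := by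
  have h0 : Ideal.absNorm P ≠ 0 := by
    rw [Ne, Ideal.absNorm_eq_zero_iff]; exact hP.ne_zero
  have h1 : Ideal.absNorm P ≠ 1 := by
    rw [Ne, Ideal.absNorm_eq_one_iff]
    intro h; exact hP.not_isUnit (Ideal.isUnit_iff.2 h)
  omega

lemma exists_q {P : Ideal (𝓞 F)} (hP : Prime P) :
    ∃ p n : ℕ, 0 < n ∧ (p : 𝓞 F) ∈ P ∧ p.Prime ∧ P.absNorm = p ^ n := by
  have h1 : P.IsPrime := Ideal.isPrime_of_prime hP
  have h2 : P.IsMaximal := h1.isMaximal hP.ne_zero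
  exact Ideal.exists_prime_and_absNorm_eq_pow P

lemma card_over {p : ℕ} (hp : p.Prime) (G : Finset (Ideal (𝓞 F)))
    (hG : ∀ P ∈ G, Prime P ∧ (p : 𝓞 F) ∈ P) : G.card ≤ Module.finrank ℤ (𝓞 F) := by
  have hd : (∏ P ∈ G, P) ∣ Ideal.span {(p : 𝓞 F)} := by
    apply Finset.prod_primes_dvd
    · exact fun P hP ↦ (hG P hP).1
    · intro P hP
      rw [Ideal.dvd_span_singleton]; exact (hG P hP).2
  have h2 : (∏ P ∈ G, Ideal.absNorm P) ∣ p ^ Module.finrank ℤ (𝓞 F) := by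
    rw [← Ideal.absNorm_span_natCast, ← map_prod]
    exact map_dvd _ hd
  have h3 : ∀ P ∈ G, p ≤ Ideal.absNorm P := by
    intro P hP
    obtain ⟨hP1, hP2⟩ := hG P hP
    have h4 : Ideal.absNorm P ∣ p ^ Module.finrank ℤ (𝓞 F) := by
      rw [← Ideal.absNorm_span_natCast]
      exact map_dvd _ (Ideal.dvd_span_singleton.2 hP2)
    obtain ⟨k, _, hk⟩ := (Nat.dvd_prime_pow hp).1 h4
    have := two_le_absNorm hP1
    rw [hk] at this ⊢
    rcases Nat.eq_zero_or_pos k with rfl | hk0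
    · simp at this
    · exact Nat.le_self_pow hk0.ne' p
  have h5 : p ^ G.card ≤ p ^ Module.finrank ℤ (𝓞 F) := by
    refine le_trans ?_ (Nat.le_of_dvd (pow_pos hp.pos _) h2)
    rw [← Finset.prod_const]
    exact Finset.prod_le_prod' h3
  exact (Nat.pow_le_pow_iff_right hp.one_lt).1 h5

lemma fib (g : ℕ → ℝ) (hg : ∀ n, 0 ≤ g n) (hs : Summable g) (q : Ideal (𝓞 F) → ℕ)
    (G : Finset (Ideal (𝓞 F))) (hG : ∀ P ∈ G, Prime P ∧ (q P).Prime ∧ (q P : 𝓞 F) ∈ P) :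
    ∑ P ∈ G, g (q P) ≤ Module.finrank ℤ (𝓞 F) * ∑' n, g n := by
  classical
  rw [← Finset.sum_fiberwise_of_maps_to (s := G) (t := G.image q) (g := q)
    (fun P hP ↦ Finset.mem_image_of_mem q hP)]
  calc ∑ n ∈ G.image q, ∑ P ∈ G with q P = n, g (q P) 
      ≤ ∑ n ∈ G.image q, (Module.finrank ℤ (𝓞 F) : ℝ) * g n := by
        refine Finset.sum_le_sum fun n hn ↦ ?_
        rw [Finset.sum_congr rfl (g := fun _ ↦ g n)
          (fun P hP ↦ by rw [(Finset.mem_filter.1 hP).2]), Finset.sum_const, nsmul_eq_mul]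
        refine mul_le_mul_of_nonneg_right ?_ (hg n)
        obtain ⟨P0, hP0, rfl⟩ := Finset.mem_image.1 hn
        exact_mod_cast card_over (hG P0 hP0).2.1 _ (fun P hP ↦ by
          obtain ⟨h1, h2⟩ := Finset.mem_filter.1 hP
          exact ⟨(hG P h1).1, h2 ▸ (hG P h1).2.2⟩)
    _ = (Module.finrank ℤ (𝓞 F) : ℝ) * ∑ n ∈ G.image q, g n := by rw [Finset.mul_sum]
    _ ≤ _ := by
        refine mul_le_mul_of_nonneg_left ?_ (by positivity)
        exact hs.sum_le_tsum _ (fun n _ ↦ hg n)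

lemma wt_le_inv {s : ℝ} (hs : 1 < s) {P : Ideal (𝓞 F)} (hP : Prime P) :
    wt s P ≤ 1 / (Ideal.absNorm P : ℝ) := by
  have := two_le_absNorm hP
  unfold wt
  rw [Real.rpow_neg (by positivity), one_div]
  apply inv_anti₀ (by exact_mod_cast (by omega : 0 < Ideal.absNorm P))
  calc (Ideal.absNorm P : ℝ) = (Ideal.absNorm P : ℝ)^(1:ℝ) := by simp
    _ ≤ _ := Real.rpow_le_rpow_of_exponent_le (by exact_mod_cast (by omega : 1 ≤ Ideal.absNorm P)) hs.le

lemma exists_qfun : ∃ q n : Ideal (𝓞 F) → ℕ, ∀ P, Prime P → 0 < n P ∧ (q P : 𝓞 F) ∈ P ∧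
    (q P).Prime ∧ P.absNorm = q P ^ n P := by
  classical
  have : ∀ P : Ideal (𝓞 F), ∃ q n : ℕ, Prime P → 0 < n ∧ (q : 𝓞 F) ∈ P ∧
    q.Prime ∧ P.absNorm = q ^ n := by
    intro P
    by_cases hP : Prime P
    · obtain ⟨q, n, h⟩ := exists_q hP
      exact ⟨q, n, fun _ ↦ h⟩
    · exact ⟨0, 0, fun h ↦ absurd h hP⟩
  choose q n h using this
  exact ⟨q, n, h⟩

lemma sq_bound : ∃ c : ℝ, ∀ s : ℝ, 1 < s → ∀ G : Finset (Ideal (𝓞 F)), (∀ P ∈ G, Prime P) →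
    ∑ P ∈ G, wt s P ^ 2 ≤ c := by
  obtain ⟨q, n, hq⟩ := exists_qfun (F := F)
  refine ⟨Module.finrank ℤ (𝓞 F) * ∑' n : ℕ, 1 / (n:ℝ)^2, fun s hs G hG ↦ ?_⟩
  refine le_trans ?_ (fib (fun n : ℕ ↦ 1 / (n:ℝ)^2) (fun n ↦ by positivity)
    (Real.summable_one_div_nat_pow.2 one_lt_two) q G 
    (fun P hP ↦ ⟨hG P hP, (hq P (hG P hP)).2.2.1, (hq P (hG P hP)).2.1⟩))
  refine Finset.sum_le_sum fun P hP ↦ ?_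
  obtain ⟨h1, h2, h3, h4⟩ := hq P (hG P hP)
  have h5 := wt_le_inv hs (hG P hP)
  have h6 : (q P : ℝ) ≤ Ideal.absNorm P := by
    rw [h4]; exact_mod_cast Nat.le_self_pow h1.ne' _
  have h7 : (0:ℝ) < q P := by exact_mod_cast h3.pos
  calc wt s P ^ 2 ≤ (1 / (q P : ℝ))^2 := by
        apply pow_le_pow_left₀ (wt_nonneg _ _)
        exact h5.trans (one_div_le_one_div_of_le h7 h6)
    _ = _ := by simp

end

/-- Comparison of zeta functions. -/
lemma compare {L M : Type*} [Field L] [NumberField L] [Field M] [NumberField M] [Algebra L M]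
    (a : 𝓞 L) (ha : a ≠ 0) (bad : ℕ → Prop)
    (hbad : Summable (Set.indicator {p : ℕ | bad p} (fun p : ℕ ↦ 1 / (p:ℝ))))
    (hsplit : ∀ P : Ideal (𝓞 L), Prime P → (Ideal.absNorm P).Prime → a ∉ P →
      ¬ bad (Ideal.absNorm P) → ∃ P1 P2 : Ideal (𝓞 M), Prime P1 ∧ Prime P2 ∧ P1 ≠ P2 ∧
        P1.comap (algebraMap (𝓞 L) (𝓞 M)) = P ∧ P2.comap (algebraMap (𝓞 L) (𝓞 M)) = P ∧
        P1.absNorm = P.absNorm ∧ P2.absNorm = P.absNorm) :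
    ∃ c : ℝ, ∀ s : ℝ, 1 < s → (dedekindZeta L s).re ^ 2 ≤ c * (dedekindZeta M s).re := by
  classical
  obtain ⟨c2, hc2⟩ := sq_bound (F := L)
  obtain ⟨c3, hc3⟩ := sq_bound (F := M)
  obtain ⟨q, n, hq⟩ := exists_qfun (F := L)
  set D : ℝ := (Module.finrank ℤ (𝓞 L) : ℝ) with hD
  let b : ℕ → ℝ := Set.indicator {p : ℕ | bad p} (fun p : ℕ ↦ 1 / (p:ℝ))
  have hb0 : ∀ n, 0 ≤ b n := fun n ↦ Set.indicator_nonneg (fun _ _ ↦ by positivity) n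
  let Y : Finset (Ideal (𝓞 L)) :=
    (UniqueFactorizationMonoid.normalizedFactors (Ideal.span {a})).toFinset
  set c0 : ℝ := 2 * c2 + D * (∑' n : ℕ, 1 / (n:ℝ)^2) + Y.card + D * ∑' n, b n with hc0
  have hspan : Ideal.span {a} ≠ (0 : Ideal (𝓞 L)) := by
    rw [Ne, Ideal.zero_eq_bot, Ideal.span_singleton_eq_bot]; exact ha
  let good : Ideal (𝓞 L) → Prop := fun P ↦ (Ideal.absNorm P).Prime ∧ a ∉ P ∧ ¬ bad (Ideal.absNorm P)
  have key : ∀ s : ℝ, 1 < s → (dedekindZeta L s).re ≤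
      Real.exp (c0 + c3 / 2) * Real.sqrt (dedekindZeta M s).re := by
    intro s hs
    refine upper hs fun G hG ↦ ?_
    have e1 : ∑ P ∈ G, (wt s P + 2 * wt s P ^ 2) ≤ c0 + ∑ P ∈ G.filter good, wt s P := by
      have hpt : ∀ P ∈ G, wt s P ≤ 1 / (q P : ℝ)^2 + (if P ∈ Y then 1 else 0) + b (q P) +
          (if good P then wt s P else 0) := by
        intro P hP
        obtain ⟨h1, h2, h3, h4⟩ := hq P (hG P hP)
        have h5 := wt_le_inv hs (hG P hP)
        have hw := wt_nonneg s P
        have hh := wt_le_half hs (hG P hP)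
        have i1 : 0 ≤ 1 / (q P : ℝ)^2 := by positivity
        have i2 : (0:ℝ) ≤ if P ∈ Y then 1 else 0 := by split_ifs <;> norm_num
        have i3 := hb0 (q P)
        have i4 : 0 ≤ if good P then wt s P else 0 := by split_ifs; exacts [hw, le_rfl]
        have h7 : (0:ℝ) < q P := by exact_mod_cast h3.pos
        by_cases hn : n P = 1
        · rw [hn, pow_one] at h4
          by_cases haP : a ∈ P
          · have : P ∈ Y := by
              rw [Multiset.mem_toFinset, UniqueFactorizationMonoid.mem_normalizedFactors_iff' hspan]
              exact ⟨(hG P hP).irreducible, normalize_eq P, Ideal.dvd_span_singleton.2 haP⟩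
            rw [if_pos this] at i2 ⊢
            linarith
          · by_cases hbP : bad (q P)
            · have : b (q P) = 1 / (q P : ℝ) := Set.indicator_of_mem (show q P ∈ {p | bad p} from hbP) _
              rw [h4] at h5
              linarith
            · have : good P := ⟨h4 ▸ h3, haP, h4 ▸ hbP⟩
              rw [if_pos this] at i4 ⊢
              linarith
        · have hn2 : 2 ≤ n P := by omega
          have h6 : (q P : ℝ)^2 ≤ Ideal.absNorm P := by
            rw [h4]; exact_mod_cast Nat.pow_le_pow_right h3.pos hn2
          have := one_div_le_one_div_of_le (by positivity) h6
          linarith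
      have hfib : ∀ P ∈ G, Prime P ∧ (q P).Prime ∧ (q P : 𝓞 L) ∈ P :=
        fun P hP ↦ ⟨hG P hP, (hq P (hG P hP)).2.2.1, (hq P (hG P hP)).2.1⟩
      have f1 := fib (fun n : ℕ ↦ 1 / (n:ℝ)^2) (fun n ↦ by positivity)
        (Real.summable_one_div_nat_pow.2 one_lt_two) q G hfib
      have f2 := fib b hb0 hbad q G hfib
      have f3 : ∑ P ∈ G, (if P ∈ Y then (1:ℝ) else 0) ≤ Y.card := by
        rw [← Finset.sum_filter, Finset.sum_const, nsmul_eq_mul, mul_one]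
        exact_mod_cast Finset.card_le_card (fun P hP ↦ (Finset.mem_filter.1 hP).2)
      have f4 := Finset.sum_le_sum hpt
      rw [Finset.sum_add_distrib, Finset.sum_add_distrib, Finset.sum_add_distrib,
        ← Finset.sum_filter (p := good)] at f4
      have f5 := hc2 s hs G hG
      rw [Finset.sum_add_distrib, ← Finset.mul_sum]
      linarith
    have hsp : ∀ P : {P // P ∈ G.filter good}, ∃ P1 P2 : Ideal (𝓞 M), Prime P1 ∧ Prime P2 ∧ P1 ≠ P2 ∧
        P1.comap (algebraMap (𝓞 L) (𝓞 M)) = P ∧ P2.comap (algebraMap (𝓞 L) (𝓞 M)) = P ∧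
        P1.absNorm = P.1.absNorm ∧ P2.absNorm = P.1.absNorm := by
      rintro ⟨P, hP⟩
      obtain ⟨h1, h2, h3, h4⟩ := Finset.mem_filter.1 hP
      exact hsplit P (hG P h1) h2 h3 h4
    choose P1 P2 p1 p2 hne hc1 hc2' hn1 hn2 using hsp
    let H : Finset (Ideal (𝓞 M)) := Finset.univ.image P1 ∪ Finset.univ.image P2
    have hH : ∀ P ∈ H, Prime P := by
      intro P hP
      rcases Finset.mem_union.1 hP with h | h <;> obtain ⟨x, _, rfl⟩ := Finset.mem_image.1 h
      exacts [p1 x, p2 x]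
    have i1 : Function.Injective P1 := fun x y hxy ↦ Subtype.ext (by rw [← hc1 x, ← hc1 y, hxy])
    have i2 : Function.Injective P2 := fun x y hxy ↦ Subtype.ext (by rw [← hc2' x, ← hc2' y, hxy])
    have hdisj : Disjoint (Finset.univ.image P1) (Finset.univ.image P2) := by
      rw [Finset.disjoint_left]
      intro P h h'
      obtain ⟨x, _, rfl⟩ := Finset.mem_image.1 h
      obtain ⟨y, _, hy⟩ := Finset.mem_image.1 h'
      have : x = y := Subtype.ext (by rw [← hc1 x, ← hc2' y, hy])
      subst this
      exact hne x hy.symm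
    have e2 : ∑ P ∈ H, wt s P = 2 * ∑ P ∈ G.filter good, wt s P := by
      rw [Finset.sum_union hdisj, Finset.sum_image (fun x _ y _ h ↦ i1 h),
        Finset.sum_image (fun x _ y _ h ↦ i2 h), ← Finset.sum_coe_sort (G.filter good)]
      rw [Finset.sum_congr rfl (g := fun x : {P // P ∈ G.filter good} ↦ wt s x.1)
          (fun x _ ↦ by unfold wt; rw [hn1 x]),
        Finset.sum_congr rfl (f := fun x ↦ wt s (P2 x)) (g := fun x : {P // P ∈ G.filter good} ↦ wt s x.1)
          (fun x _ ↦ by unfold wt; rw [hn2 x])]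
      ring
    have e3 := lower hs H hH
    rw [Finset.sum_sub_distrib, e2] at e3
    have e4 := hc3 s hs H hH
    have e5 : Real.exp (∑ P ∈ G.filter good, wt s P - c3 / 2) ≤ Real.sqrt (dedekindZeta M s).re := by
      apply Real.le_sqrt_of_sq_le
      rw [← Real.exp_nat_mul]
      refine le_trans (Real.exp_le_exp.2 ?_) e3
      push_cast
      linarith
    calc Real.exp (∑ P ∈ G, (wt s P + 2 * wt s P ^ 2))
        ≤ Real.exp ((c0 + c3/2) + (∑ P ∈ G.filter good, wt s P - c3 / 2)) :=
          Real.exp_le_exp.2 (by linarith)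
      _ = Real.exp (c0 + c3/2) * Real.exp (∑ P ∈ G.filter good, wt s P - c3 / 2) := Real.exp_add _ _
      _ ≤ _ := mul_le_mul_of_nonneg_left e5 (Real.exp_pos _).le
  refine ⟨Real.exp (c0 + c3/2) ^ 2, fun s hs ↦ ?_⟩
  have hL : 0 ≤ (dedekindZeta L s).re := (wt_hasSum (F := L) hs).nonneg (fun _ ↦ wt_nonneg _ _)
  have hM : 0 ≤ (dedekindZeta M s).re := (wt_hasSum (F := M) hs).nonneg (fun _ ↦ wt_nonneg _ _)
  calc (dedekindZeta L s).re ^ 2 ≤ (Real.exp (c0 + c3 / 2) * Real.sqrt (dedekindZeta M s).re)^2 :=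
        pow_le_pow_left₀ hL (key s hs) 2
    _ = _ := by rw [mul_pow, Real.sq_sqrt hM]

lemma no_compare (L M : Type*) [Field L] [NumberField L] [Field M] [NumberField M] (c : ℝ)
    (h : ∀ s : ℝ, 1 < s → (dedekindZeta L s).re ^ 2 ≤ c * (dedekindZeta M s).re) : False := by
  have t : ∀ (F : Type _) [Field F] [NumberField F], Filter.Tendsto
      (fun s : ℝ ↦ (s - 1) * (dedekindZeta F s).re) (nhdsWithin 1 (Set.Ioi 1))
      (nhds (dedekindZeta_residue F)) := by
    intro F _ _
    have := (Complex.continuous_re.tendsto _).comp (tendsto_sub_one_mul_dedekindZeta_nhdsGT F)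
    refine this.congr fun s ↦ ?_
    simp only [Function.comp_apply]
    rw [← Complex.ofReal_one, ← Complex.ofReal_sub, Complex.re_ofReal_mul]
  have t' : ∀ (F : Type _) [Field F] [NumberField F], Filter.Tendsto
      (fun s : ℝ ↦ (s - 1) * (dedekindZeta F s).re) (nhdsWithin 1 (Set.Ioi 1))
      (nhds (dedekindZeta_residue F)) := by
    intro F _ _
    have := (Complex.continuous_re.tendsto _).comp (tendsto_sub_one_mul_dedekindZeta_nhdsGT F)
    refine this.congr fun s ↦ ?_
    simp only [Function.comp_apply]
    rw [← Complex.ofReal_one, ← Complex.ofReal_sub, Complex.re_ofReal_mul]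
  have hL := (t L).pow 2
  have h0 : Filter.Tendsto (fun s : ℝ ↦ s - 1) (nhdsWithin 1 (Set.Ioi 1)) (nhds 0) := by
    have : Filter.Tendsto (fun s : ℝ ↦ s - 1) (nhds 1) (nhds (1 - 1)) :=
      (continuous_id.sub continuous_const).tendsto 1
    rw [sub_self] at this
    exact this.mono_left nhdsWithin_le_nhds
  have hM := (h0.mul (t' M)).const_mul c
  have hle := le_of_tendsto_of_tendsto hL hM (by
    filter_upwards [self_mem_nhdsWithin] with s hs
    have := h s hs
    have h2 : 0 ≤ (s-1)^2 := by positivity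
    nlinarith [mul_le_mul_of_nonneg_left this h2])
  have := dedekindZeta_residue_pos L
  simp at hle
  nlinarith [pow_pos this 2]

end DB

namespace DB
section
variable {L : Type*} [Field L] [NumberField L] (α : 𝓞 L)

/-- quadratic extension -/
abbrev QM (α : 𝓞 L) := QuadraticAlgebra L (α : L) 0

lemma fact_of (h : ¬ IsSquare (α : L)) : Fact (∀ r : L, r ^ 2 ≠ (α : L) + 0 * r) := by
  refine ⟨fun r hr ↦ h ⟨r, ?_⟩⟩
  rw [← pow_two, hr]; ring

variable [hf : Fact (∀ r : L, r ^ 2 ≠ (α : L) + 0 * r)]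

instance : NumberField (QM α) := NumberField.of_module_finite L (QM α)

lemma star_int {y : QM α} (hy : IsIntegral ℤ y) : IsIntegral ℤ (star y) :=
  hy.map (starRingEnd (QM α)).toIntAlgHom

lemma omega_int : IsIntegral ℤ (QuadraticAlgebra.omega : QM α) := by
  apply IsIntegral.of_pow (n := 2) (by norm_num)
  have : (QuadraticAlgebra.omega : QM α) ^ 2 = algebraMap L (QM α) (α : L) := by
    ext <;> simp [pow_two]
  rw [this]
  exact (RingOfIntegers.isIntegral_coe α).map (algebraMap L (QM α)).toIntAlgHom

lemma down_int {x : L} (h : IsIntegral ℤ (algebraMap L (QM α) x)) : IsIntegral ℤ x :=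
  (isIntegral_algHom_iff (algebraMap L (QM α)).toIntAlgHom (algebraMap L (QM α)).injective).1 h

lemma u_int (y : 𝓞 (QM α)) : IsIntegral ℤ (2 * (y : QM α).re) := by
  apply down_int α
  have : algebraMap L (QM α) (2 * (y : QM α).re) = (y : QM α) + star (y : QM α) := by
    ext <;> simp [two_mul]
  rw [this]
  exact (RingOfIntegers.isIntegral_coe y).add (star_int α (RingOfIntegers.isIntegral_coe y))

lemma v_int (y : 𝓞 (QM α)) : IsIntegral ℤ (2 * (α : L) * (y : QM α).im) := by
  apply down_int α
  have : algebraMap L (QM α) (2 * (α : L) * (y : QM α).im) =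
      ((y : QM α) - star (y : QM α)) * QuadraticAlgebra.omega := by
    ext <;> simp; ring
  rw [this]
  exact ((RingOfIntegers.isIntegral_coe y).sub
    (star_int α (RingOfIntegers.isIntegral_coe y))).mul (omega_int α)

/-- twice the real part -/
noncomputable def u (y : 𝓞 (QM α)) : 𝓞 L := ⟨_, u_int α y⟩
/-- scaled imaginary part -/
noncomputable def v (y : 𝓞 (QM α)) : 𝓞 L := ⟨_, v_int α y⟩

lemma coe_u (y : 𝓞 (QM α)) : (u α y : L) = 2 * (y : QM α).re := rfl
lemma coe_v (y : 𝓞 (QM α)) : (v α y : L) = 2 * (α : L) * (y : QM α).im := rfl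

lemma coe2 : ((2 : 𝓞 L) : L) = 2 := map_ofNat (algebraMap (𝓞 L) L) 2

lemma u_add (y z) : u α (y + z) = u α y + u α z := by
  apply RingOfIntegers.ext; simp [coe_u]; ring
lemma v_add (y z) : v α (y + z) = v α y + v α z := by
  apply RingOfIntegers.ext; simp [coe_v]; ring
lemma u_mul (y z) : 2 * α * u α (y * z) = α * (u α y * u α z) + v α y * v α z := by
  apply RingOfIntegers.ext; simp [coe_u, coe_v]; try simp only [coe2, map_ofNat]
  ring
lemma v_mul (y z) : 2 * v α (y * z) = u α y * v α z + v α y * u α z := by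
  apply RingOfIntegers.ext; simp [coe_u, coe_v]; try simp only [coe2, map_ofNat]
  ring

/-- extension of a hom -/
noncomputable def extHom {k : Type*} [Field k] (ψ : 𝓞 L →+* k) (t : k) (ht : t ^ 2 = ψ α)
    (h0 : t ≠ 0) (h2 : (2:k) ≠ 0) : 𝓞 (QM α) →+* k where
  toFun y := (ψ (u α y) + ψ (v α y) * t⁻¹) / 2
  map_one' := by
    have h1 : u α 1 = 2 := by apply RingOfIntegers.ext; simp [coe_u, QuadraticAlgebra.re_one, coe2]
    have h3 : v α 1 = 0 := by apply RingOfIntegers.ext; simp [coe_v, QuadraticAlgebra.im_one]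
    rw [h1, h3, map_ofNat]; simp [h2]
  map_zero' := by
    have h1 : u α 0 = 0 := by apply RingOfIntegers.ext; simp [coe_u]
    have h3 : v α 0 = 0 := by apply RingOfIntegers.ext; simp [coe_v]
    rw [h1, h3]; simp
  map_add' y z := by rw [u_add, v_add, map_add, map_add]; ring
  map_mul' y z := by
    have h1 := congrArg ψ (u_mul α y z)
    have h3 := congrArg ψ (v_mul α y z)
    simp only [map_mul, map_add, map_ofNat, ← ht] at h1 h3
    field_simp
    linear_combination h1 + t * h3

lemma extHom_alg {k : Type*} [Field k] (ψ : 𝓞 L →+* k) (t : k) (ht : t ^ 2 = ψ α)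
    (h0 : t ≠ 0) (h2 : (2:k) ≠ 0) (x : 𝓞 L) :
    extHom α ψ t ht h0 h2 (algebraMap (𝓞 L) (𝓞 (QM α)) x) = ψ x := by
  have hx : ((algebraMap (𝓞 L) (𝓞 (QM α)) x : 𝓞 (QM α)) : QM α) = algebraMap L (QM α) (x : L) := rfl
  have h1 : u α (algebraMap (𝓞 L) (𝓞 (QM α)) x) = 2 * x := by
    apply RingOfIntegers.ext; simp [coe_u, hx, coe2]
  have h3 : v α (algebraMap (𝓞 L) (𝓞 (QM α)) x) = 0 := by
    apply RingOfIntegers.ext; simp [coe_v, hx]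
  change (ψ (u α _) + ψ (v α _) * t⁻¹) / 2 = _
  rw [h1, h3, map_mul, map_ofNat]; simp [h2]

/-- the square root of alpha as an integer -/
noncomputable def om : 𝓞 (QM α) := ⟨QuadraticAlgebra.omega, omega_int α⟩

lemma extHom_omega {k : Type*} [Field k] (ψ : 𝓞 L →+* k) (t : k) (ht : t ^ 2 = ψ α)
    (h0 : t ≠ 0) (h2 : (2:k) ≠ 0) :
    extHom α ψ t ht h0 h2 (om α) = t := by
  have h1 : u α (om α) = 0 := by
    apply RingOfIntegers.ext
    change 2 * (QuadraticAlgebra.omega : QM α).re = _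
    simp
  have h3 : v α (om α) = 2 * α := by
    apply RingOfIntegers.ext
    change 2 * (α : L) * (QuadraticAlgebra.omega : QM α).im = _
    simp [coe2]
  change (ψ (u α _) + ψ (v α _) * t⁻¹) / 2 = _
  rw [h1, h3, map_mul, map_ofNat, ← ht, map_zero]; field_simp; try ring

end

lemma absNorm_ker {F : Type*} [Field F] [NumberField F] {p : ℕ} [Fact p.Prime]
    (φ : 𝓞 F →+* ZMod p) : Ideal.absNorm (RingHom.ker φ) = p := by
  have hs : Function.Surjective φ := ZMod.ringHom_surjective φ
  have e := RingHom.quotientKerEquivOfSurjective hs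
  rw [Ideal.absNorm_apply, Submodule.cardQuot_apply]
  exact (Nat.card_congr e.toEquiv).trans (Nat.card_zmod p)

lemma prime_of_absNorm {F : Type*} [Field F] [NumberField F] {I : Ideal (𝓞 F)}
    (h : (Ideal.absNorm I).Prime) : Prime I := by
  have h1 := Ideal.isPrime_of_irreducible_absNorm (Nat.prime_iff.1 h).irreducible
  refine Ideal.prime_of_isPrime ?_ h1
  rintro rfl
  simp at h
  exact Nat.not_prime_zero h

theorem not_summable_bad {L : Type*} [Field L] [NumberField L] (α : 𝓞 L)
    (hα : ¬ IsSquare (α : L)) :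
    ¬ Summable (Set.indicator
      {p : ℕ | p.Prime ∧ ∃ ψ : 𝓞 L →+* ZMod p, ¬ IsSquare (ψ α)} (fun p : ℕ ↦ 1 / (p:ℝ))) := by
  intro hsum
  have := fact_of α hα
  have hα0 : α ≠ 0 := by
    rintro rfl
    exact hα ⟨0, by simp⟩
  suffices h : _ by
    obtain ⟨c, hc⟩ := compare (L := L) (M := QM α) (2 * α) (mul_ne_zero two_ne_zero hα0)
      (fun p ↦ p.Prime ∧ ∃ ψ : 𝓞 L →+* ZMod p, ¬ IsSquare (ψ α)) hsum h
    exact no_compare L (QM α) c hc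
  intro P hP hp haP hbad
  set p := Ideal.absNorm P with hpdef
  have : Fact p.Prime := ⟨hp⟩
  have hPp : P.IsPrime := Ideal.isPrime_of_prime hP
  have hcard : Nat.card (𝓞 L ⧸ P) = p := by
    rw [hpdef, Ideal.absNorm_apply, Submodule.cardQuot_apply]
  have : Finite (𝓞 L ⧸ P) := Nat.finite_of_card_ne_zero (by rw [hcard]; exact hp.ne_zero)
  have := Fintype.ofFinite (𝓞 L ⧸ P)
  let e : ZMod p ≃+* (𝓞 L ⧸ P) := ZMod.ringEquivOfPrime _ hp (by rw [← Nat.card_eq_fintype_card, hcard])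
  let ψ : 𝓞 L →+* ZMod p := (e.symm : (𝓞 L ⧸ P) →+* ZMod p).comp (Ideal.Quotient.mk P)
  have hker : ∀ x, ψ x = 0 ↔ x ∈ P := by
    intro x
    simp [ψ, Ideal.Quotient.eq_zero_iff_mem]
  have hsq : IsSquare (ψ α) := by
    by_contra h
    exact hbad ⟨hp, ψ, h⟩
  obtain ⟨t, ht⟩ := hsq
  rw [← pow_two] at ht
  have h2α : ψ (2 * α) ≠ 0 := fun h ↦ haP ((hker _).1 h)
  rw [map_mul, map_ofNat] at h2α
  have h2 : (2 : ZMod p) ≠ 0 := left_ne_zero_of_mul h2α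
  have h0 : t ≠ 0 := by
    rintro rfl
    apply right_ne_zero_of_mul h2α
    rw [ht]; simp
  have ht' : (-t)^2 = ψ α := by rw [ht]; ring
  let φ1 := extHom α ψ t ht.symm h0 h2
  let φ2 := extHom α ψ (-t) ht' (neg_ne_zero.2 h0) h2
  refine ⟨RingHom.ker φ1, RingHom.ker φ2, prime_of_absNorm (by rw [absNorm_ker]; exact hp),
    prime_of_absNorm (by rw [absNorm_ker]; exact hp), ?_, ?_, ?_, absNorm_ker φ1, absNorm_ker φ2⟩
  · intro heq
    obtain ⟨b, hb⟩ := ZMod.ringHom_surjective ψ t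
    let w : 𝓞 (QM α) := om α - algebraMap (𝓞 L) (𝓞 (QM α)) b
    have e1 : φ1 w = t - ψ b := by
      refine (RingHom.map_sub φ1 (om α) (algebraMap (𝓞 L) (𝓞 (QM α)) b)).trans ?_
      exact congrArg₂ (· - ·) (extHom_omega α ψ _ _ _ h2) (extHom_alg α ψ _ _ _ h2 b)
    have e2 : φ2 w = -t - ψ b := by
      refine (RingHom.map_sub φ2 (om α) (algebraMap (𝓞 L) (𝓞 (QM α)) b)).trans ?_
      exact congrArg₂ (· - ·) (extHom_omega α ψ _ _ _ h2) (extHom_alg α ψ _ _ _ h2 b)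
    have h1 : w ∈ RingHom.ker φ1 := by
      rw [RingHom.mem_ker, e1, hb, sub_self]
    rw [heq, RingHom.mem_ker, e2, hb] at h1
    have : 2 * t = 0 := by linear_combination -h1
    exact mul_ne_zero h2 h0 this
  · ext x
    rw [Ideal.mem_comap, RingHom.mem_ker, extHom_alg, hker]
  · ext x
    rw [Ideal.mem_comap, RingHom.mem_ker, extHom_alg, hker]

end DB

namespace DB
section sieve
variable {O : Type*} [CommRing O]

/-- density properties used -/
structure IsDens (δ : Set O → ℝ) : Prop where
  nonneg : ∀ P, 0 ≤ δ P
  mono : ∀ P Q, P ⊆ Q → δ P ≤ δ Q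
  union : ∀ P Q, δ (P ∪ Q) ≤ δ P + δ Q
  trans : ∀ (α : O) (P : Set O), δ ((α + ·) '' P) = δ P
  ideal : ∀ I : Ideal O, I ≠ ⊥ → δ (I : Set O) = 1 / (Nat.card (O ⧸ I) : ℝ)

lemma IsDens.biUnion {δ : Set O → ℝ} (h : IsDens δ) {ι : Type*} (s : Finset ι) (hs : s.Nonempty)
    (T : ι → Set O) : δ (⋃ i ∈ s, T i) ≤ ∑ i ∈ s, δ (T i) := by
  classical
  induction hs using Finset.Nonempty.cons_induction with
  | singleton a => simp
  | cons a s ha hs ih =>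
    rw [Finset.sum_cons, Finset.cons_eq_insert, Finset.set_biUnion_insert]
    exact (h.union _ _).trans (by gcongr)

lemma IsDens.sieve [CharZero O] {δ : Set O → ℝ} (h : IsDens δ) (F : Finset ℕ)
    (hF : ∀ p ∈ F, p.Prime) (φ : ∀ p : F, O →+* ZMod p) (r : ∀ p : F, ZMod p) (T : Set O)
    (hT : ∀ n ∈ T, ∀ p : F, φ p n ≠ r p) : δ T ≤ ∏ p ∈ F, (1 - 1 / (p : ℝ)) := by
  classical
  have hpr : ∀ p : F, Fact (p : ℕ).Prime := fun p ↦ ⟨hF p p.2⟩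
  let Φ : O →+* (∀ p : F, ZMod p) := RingHom.pi φ
  have hco : Pairwise (Function.onFun Nat.Coprime (fun p : F ↦ (p : ℕ))) := by
    intro p q hpq
    exact (Nat.coprime_primes (hF p p.2) (hF q q.2)).2 (fun h ↦ hpq (Subtype.ext h))
  have hsurj : Function.Surjective Φ := by
    intro y
    let e := ZMod.prodEquivPi (fun p : F ↦ (p : ℕ)) hco
    obtain ⟨z, hz⟩ := ZMod.intCast_surjective (e.symm y)
    refine ⟨(z : O), ?_⟩
    rw [map_intCast, ← e.apply_symm_apply y, ← hz, map_intCast]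
  have hcard : Nat.card (O ⧸ RingHom.ker Φ) = ∏ p : F, (p : ℕ) := by
    rw [Nat.card_congr (RingHom.quotientKerEquivOfSurjective hsurj).toEquiv, Nat.card_pi]
    simp
  have hne : RingHom.ker Φ ≠ ⊥ := by
    intro hbot
    have h1 : ((∏ p ∈ F, p : ℕ) : O) ∈ RingHom.ker Φ := by
      rw [RingHom.mem_ker, map_natCast]
      funext p
      rw [Pi.natCast_apply, Pi.zero_apply, ZMod.natCast_eq_zero_iff]
      exact Finset.dvd_prod_of_mem _ p.2
    rw [hbot, Ideal.mem_bot, Nat.cast_eq_zero] at h1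
    exact Finset.prod_ne_zero_iff.2 (fun p hp ↦ (hF p hp).ne_zero) h1
  have hfib : ∀ y, δ (Φ ⁻¹' {y}) = 1 / ((∏ p : F, (p : ℕ) : ℕ) : ℝ) := by
    intro y
    obtain ⟨a, rfl⟩ := hsurj y
    rw [← hcard, ← h.ideal _ hne]
    refine Eq.trans ?_ (h.trans a _)
    congr 1
    ext x
    simp only [Set.mem_preimage, Set.mem_singleton_iff, Set.mem_image, SetLike.mem_coe,
      RingHom.mem_ker]
    constructor
    · intro hx
      exact ⟨x - a, by rw [map_sub, hx, sub_self], by ring⟩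
    · rintro ⟨b, hb, rfl⟩
      rw [map_add, hb, add_zero]
  let Y : Finset (∀ p : F, ZMod p) := Fintype.piFinset (fun p ↦ Finset.univ.erase (r p))
  have hY : Y.Nonempty := by
    rw [Fintype.piFinset_nonempty]
    intro p
    refine ⟨r p + 1, by simp⟩
  have hYc : Y.card = ∏ p : F, ((p : ℕ) - 1) := by
    simp [Y, Fintype.card_piFinset, Finset.card_erase_of_mem, ZMod.card]
  have hsub : T ⊆ ⋃ y ∈ Y, Φ ⁻¹' {y} := by
    intro n hn
    simp only [Set.mem_iUnion, Set.mem_preimage, Set.mem_singleton_iff]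
    refine ⟨Φ n, ?_, rfl⟩
    simp only [Y, Fintype.mem_piFinset, Finset.mem_erase, Finset.mem_univ, and_true]
    intro p
    exact hT n hn p
  refine (h.mono _ _ hsub).trans ((h.biUnion Y hY _).trans ?_)
  simp only [hfib]
  rw [Finset.sum_const, hYc, nsmul_eq_mul, Nat.cast_prod, Nat.cast_prod, mul_one_div,
    ← Finset.prod_div_distrib, ← Finset.prod_coe_sort F]
  apply le_of_eq
  apply Finset.prod_congr rfl
  intro p _
  have := (hF p p.2).pos
  rw [Nat.cast_sub (by omega), Nat.cast_one]
  have : (p : ℝ) ≠ 0 := by positivity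
  field_simp

lemma IsDens.eq_zero [CharZero O] {δ : Set O → ℝ} (h : IsDens δ) (P : Set ℕ)
    (hP : ∀ p ∈ P, p.Prime) (T : Set O)
    (hT : ∀ p ∈ P, ∃ (φ : O →+* ZMod p) (r : ZMod p), ∀ n ∈ T, φ n ≠ r)
    (hns : ¬ Summable (Set.indicator P (fun p : ℕ ↦ 1 / (p:ℝ)))) : δ T = 0 := by
  classical
  by_contra hne
  have hpos : 0 < δ T := lt_of_le_of_ne (h.nonneg T) (Ne.symm hne)
  apply hns
  apply summable_of_sum_le (c := - Real.log (δ T))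
  · intro p
    exact Set.indicator_nonneg (fun _ _ ↦ by positivity) _
  intro G
  simp only [Set.indicator_apply]
  rw [← Finset.sum_filter]
  set F := G.filter (fun p ↦ p ∈ P) with hFdef
  have hFP : ∀ p ∈ F, p ∈ P := fun p hp ↦ (Finset.mem_filter.1 hp).2
  choose φ r hφ using hT
  have h1 := h.sieve F (fun p hp ↦ hP p (hFP p hp)) (fun p ↦ φ p (hFP p p.2))
    (fun p ↦ r p (hFP p p.2)) T (fun n hn p ↦ hφ p (hFP p p.2) n hn)
  have h2 : ∏ p ∈ F, (1 - 1 / (p : ℝ)) ≤ Real.exp (- ∑ p ∈ F, 1 / (p:ℝ)) := by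
    rw [← Finset.sum_neg_distrib, Real.exp_sum]
    apply Finset.prod_le_prod
    · intro p hp
      have : (1:ℝ) ≤ p := by exact_mod_cast (hP p (hFP p hp)).one_le
      have := (div_le_one (by linarith : (0:ℝ) < p)).2 this
      linarith
    · intro p hp
      have := Real.add_one_le_exp (-(1 / (p:ℝ)))
      linarith
  have h3 := Real.log_le_log hpos (h1.trans h2)
  rw [Real.log_exp] at h3
  linarith

end sieve

section loc
variable {R L : Type*} [CommRing R] [IsDomain R] [Field L] [Algebra R L] [IsFractionRing R L]

lemma exists_loc (m : R) (hm : m ≠ 0) : ∃ W : Subring L,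
    (∀ x, x ∈ W ↔ ∃ (k : ℕ) (y : R), algebraMap R L m ^ k * x = algebraMap R L y) ∧
    ∀ (k : Type) [Field k] (ψ : R →+* k), ψ m ≠ 0 →
      ∃ Ψ : W →+* k, ∀ (y : R) (x : W), (x : L) = algebraMap R L y → Ψ x = ψ y := by
  have hinj : Function.Injective (algebraMap R L) := IsFractionRing.injective R L
  have hmL : algebraMap R L m ≠ 0 := fun h ↦ hm (hinj (by rw [h, map_zero]))
  let j : Localization.Away m →+* L := IsLocalization.Away.lift m (g := algebraMap R L) hmL.isUnit
  have hj : ∀ y, j (algebraMap R _ y) = algebraMap R L y := fun y ↦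
    IsLocalization.Away.lift_eq m hmL.isUnit y
  have hdata : ∀ z : Localization.Away m, ∃ (k : ℕ) (y : R),
      algebraMap R (Localization.Away m) m ^ k * z = algebraMap R _ y := by
    intro z
    obtain ⟨k, y, hy⟩ := IsLocalization.Away.surj m z
    exact ⟨k, y, by rw [← hy]; ring⟩
  have hunit : IsUnit (algebraMap R (Localization.Away m) m) :=
    IsLocalization.Away.algebraMap_isUnit m
  have jinj : Function.Injective j := by
    rw [injective_iff_map_eq_zero]
    intro z hz
    obtain ⟨k, y, hy⟩ := hdata z
    have := congrArg j hy
    rw [map_mul, hz, mul_zero, hj, eq_comm, ← map_zero (algebraMap R L)] at this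
    rw [hinj this, map_zero] at hy
    exact (hunit.pow k).mul_right_eq_zero.1 hy
  refine ⟨j.range, ?_, ?_⟩
  · intro x
    constructor
    · rintro ⟨z, rfl⟩
      obtain ⟨k, y, hy⟩ := hdata z
      exact ⟨k, y, by rw [← hj, ← hj, ← hy, map_mul, map_pow]⟩
    · rintro ⟨k, y, hy⟩
      refine ⟨algebraMap R _ y * ((hunit.pow k).unit⁻¹ : (Localization.Away m)ˣ), ?_⟩
      apply mul_left_cancel₀ (pow_ne_zero k hmL)
      rw [hy, ← hj, ← hj, ← map_pow, ← map_mul]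
      congr 1
      have := (hunit.pow k).mul_val_inv
      linear_combination (algebraMap R (Localization.Away m)) y * this
  · intro k _ ψ hψ
    let g : Localization.Away m →+* k := IsLocalization.Away.lift m (g := ψ) hψ.isUnit
    have hjb : Function.Bijective j.rangeRestrict :=
      ⟨fun a b h ↦ jinj (congrArg Subtype.val h), j.rangeRestrict_surjective⟩
    let e := RingEquiv.ofBijective j.rangeRestrict hjb
    refine ⟨g.comp (e.symm : j.range →+* Localization.Away m), ?_⟩
    intro y x hx
    have : e.symm x = algebraMap R _ y := by
      rw [RingEquiv.symm_apply_eq]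
      apply Subtype.ext
      rw [hx, ← hj]; rfl
    simp only [RingHom.comp_apply, RingHom.coe_coe, this]
    exact IsLocalization.Away.lift_eq m hψ.isUnit y

end loc
end DB

namespace DB

lemma exists_clear (K : Type*) [Field K] [NumberField K] (S : Finset (HeightOneSpectrum (𝓞 K))) :
    ∃ m : ℕ, m ≠ 0 ∧ ∀ x : SInt K S, ∃ (k : ℕ) (y : 𝓞 K), (m : K) ^ k * (x : K) = algebraMap (𝓞 K) K y := by
  classical
  let m : ℕ := ∏ v ∈ S, Ideal.absNorm v.asIdeal
  have hmv : ∀ v ∈ S, v.valuation K (algebraMap (𝓞 K) K (m : 𝓞 K)) < 1 := by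
    intro v hv
    rw [HeightOneSpectrum.valuation_lt_one_iff_mem]
    obtain ⟨c, hc⟩ : Ideal.absNorm v.asIdeal ∣ m := Finset.dvd_prod_of_mem _ hv
    rw [hc, Nat.cast_mul]
    exact Ideal.mul_mem_right _ _ (Ideal.absNorm_mem _)
  refine ⟨m, ?_, ?_⟩
  · refine Finset.prod_ne_zero_iff.2 fun v hv ↦ ?_
    rw [Ne, Ideal.absNorm_eq_zero_iff]
    exact v.ne_bot
  intro x
  have hex : ∀ v ∈ S, ∃ k : ℕ, v.valuation K (algebraMap (𝓞 K) K (m : 𝓞 K)) ^ k * v.valuation K (x : K) ≤ 1 := by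
    intro v hv
    by_cases hx : v.valuation K (x : K) = 0
    · exact ⟨0, by rw [hx]; simp⟩
    obtain ⟨k, hk⟩ := exists_pow_lt₀ (hmv v hv) (Units.mk0 _ (inv_ne_zero hx))
    refine ⟨k, ?_⟩
    rw [Units.val_mk0] at hk
    calc _ ≤ (v.valuation K (x : K))⁻¹ * v.valuation K (x : K) := by gcongr
      _ = 1 := inv_mul_cancel₀ hx
  choose! k hk using hex
  let N := ∑ v ∈ S, k v
  have hmm : (m : K) = algebraMap (𝓞 K) K (m : 𝓞 K) := by simp
  obtain ⟨y, hy⟩ := HeightOneSpectrum.mem_integers_of_valuation_le_one K ((m : K) ^ N * (x : K)) (by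
    intro v
    rw [map_mul, map_pow, hmm]
    have hle := v.valuation_le_one (K := K) (m : 𝓞 K)
    by_cases hv : v ∈ S
    · refine le_trans ?_ (hk v hv)
      have : k v ≤ N := Finset.single_le_sum (f := k) (fun _ _ ↦ Nat.zero_le _) hv
      exact mul_le_mul_left (pow_le_pow_right_of_le_one' hle this) _
    · have h1 := Set.integer_valuation_le_one (S : Set (HeightOneSpectrum (𝓞 K))) K x (v := v) (by simpa using hv)
      exact mul_le_one' (pow_le_one' hle _) h1)
  exact ⟨N, y, hy.symm⟩

lemma main (K : Type*) [Field K] [NumberField K] (S : Finset (HeightOneSpectrum (𝓞 K)))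
    (L : Type*) [Field L] [NumberField L] [Algebra K L]
    (δ : Set (SInt K S) → ℝ) (hδ : IsDens δ) (A f : (SInt K S)[X]) (e : SInt K S)
    (i : SInt K S →+* L) (hi : i = (algebraMap K L).comp (algebraMap (SInt K S) K))
    (θ : L) (hθ : IsIntegral ℤ θ) (hf : f.eval₂ i θ = 0)
    (hw : ¬ IsSquare (i e * A.eval₂ i θ)) :
    δ {n | ∃ s t, e * A.eval n = s ^ 2 - f.eval n * t ^ 2} = 0 := by
  classical
  obtain ⟨m, hm0, hm⟩ := exists_clear K S
  have hmR : (m : 𝓞 L) ≠ 0 := Nat.cast_ne_zero.2 hm0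
  obtain ⟨W, hW, hext⟩ := exists_loc (R := 𝓞 L) (L := L) (m : 𝓞 L) hmR
  have hmm : algebraMap (𝓞 L) L (m : 𝓞 L) = (m : L) := by simp
  rw [hmm] at hW
  have hiW : ∀ x, i x ∈ W := by
    intro x
    rw [hW]
    obtain ⟨k, y, hy⟩ := hm x
    refine ⟨k, algebraMap (𝓞 K) (𝓞 L) y, ?_⟩
    have := congrArg (algebraMap K L) hy
    rw [map_mul, map_pow, map_natCast] at this
    rw [hi]
    exact this
  let θ' : 𝓞 L := ⟨θ, hθ⟩
  have hθW : θ ∈ W := (hW _).2 ⟨0, θ', by rw [pow_zero, one_mul]; rfl⟩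
  let j : SInt K S →+* W := i.codRestrict W hiW
  let θW : W := ⟨θ, hθW⟩
  have hev : ∀ g : (SInt K S)[X], ((g.eval₂ j θW : W) : L) = g.eval₂ i θ := by
    intro g
    rw [← Subring.subtype_apply, Polynomial.hom_eval₂]
    rfl
  let w : W := j e * A.eval₂ j θW
  have hwL : (w : L) = i e * A.eval₂ i θ := by
    rw [← hev]; rfl
  have hfW : f.eval₂ j θW = 0 := by
    apply Subtype.ext
    rw [hev, hf]; rfl
  obtain ⟨k, y, hy⟩ := (hW _).1 w.2
  have hmL : (m : L) ≠ 0 := Nat.cast_ne_zero.2 hm0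
  let α : 𝓞 L := (m : 𝓞 L) ^ k * y
  have hα : (α : L) = ((m : L) ^ k) ^ 2 * (w : L) := by
    simp only [α, map_mul, map_pow, map_natCast]
    rw [← hy]; ring
  have hαns : ¬ IsSquare (α : L) := by
    rintro ⟨z, hz⟩
    apply hw
    rw [← hwL]
    refine ⟨z / (m : L) ^ k, ?_⟩
    rw [hα] at hz
    field_simp
    linear_combination hz
  have hns := not_summable_bad α hαns
  set Q : Set ℕ := {p : ℕ | p.Prime ∧ ∃ ψ : 𝓞 L →+* ZMod p, ¬ IsSquare (ψ α)} with hQ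
  apply hδ.eq_zero {p | p ∈ Q ∧ ¬ p ∣ m} (fun p hp ↦ hp.1.1)
  · rintro p ⟨⟨hp, ψ, hψ⟩, hpm⟩
    have : Fact p.Prime := ⟨hp⟩
    have hψm : ψ (m : 𝓞 L) ≠ 0 := by
      rw [map_natCast, Ne, ZMod.natCast_eq_zero_iff]
      exact hpm
    obtain ⟨Ψ, hΨ⟩ := hext (ZMod p) ψ hψm
    refine ⟨Ψ.comp j, Ψ θW, ?_⟩
    rintro n ⟨s, t, hst⟩ hn
    apply hψ
    have h1 : ψ α = ((m : ZMod p) ^ k) ^ 2 * Ψ w := by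
      have := hΨ α (((m : W) ^ k) ^ 2 * w) (by
        refine Eq.trans ?_ hα.symm
        simp)
      rw [← this]; simp
    have h2 : ∀ g : (SInt K S)[X], (Ψ.comp j) (g.eval n) = Ψ (g.eval₂ j θW) := by
      intro g
      rw [Polynomial.hom_eval₂, ← hn, ← Polynomial.eval₂_id (p := g), Polynomial.hom_eval₂]
      rfl
    have h3 : Ψ w = (Ψ.comp j) s ^ 2 := by
      have := congrArg (Ψ.comp j) hst
      rw [map_mul, map_sub, map_mul, h2, h2, hfW, map_zero, zero_mul, sub_zero, map_pow] at this
      rw [← this]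
      simp [w]
    exact ⟨(m : ZMod p) ^ k * (Ψ.comp j) s, by rw [h1, h3]; ring⟩
  · intro hs
    apply hns
    refine (summable_of_hasFiniteSupport (f := Set.indicator {p : ℕ | p ∣ m} (fun p : ℕ ↦ 1 / (p:ℝ))) ?_ |>.add hs).of_nonneg_of_le (fun p ↦ Set.indicator_nonneg (fun _ _ ↦ by positivity) _) ?_
    · refine Set.Finite.subset (Nat.divisors m).finite_toSet fun p hp ↦ ?_
      have := Set.mem_of_indicator_ne_zero hp
      simpa [hm0] using this
    · intro p
      have : (0:ℝ) ≤ 1 / p := by positivity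
      simp only [Set.indicator_apply, Set.mem_ofPred_eq]
      by_cases h1 : p ∈ Q <;> by_cases h2 : p ∣ m <;> simp [h1, h2]

end DB

/-- **Density bound for trivial specializations.**
`K` a number field, `f ∈ O_K[X]` monic squarefree of odd degree `≥ 3`, `S` a
finite set of primes with `O = O_{K,S}` a PID, `δ` a density on `O`. Let
`[A,2B,C]` be a primitive form over `O[X]` with `B² − AC = f`, `A` coprime to
`f` in `K[X]`, not in the principal genus over `K[X]`. Let `E` be a finite set
of representatives of `Oˣ/(Oˣ)²`; for `ε ∈ E`, let `ρ_ε` be a root of `f` in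
`K̄` with `ε·A(ρ_ε)` not a square in `K(ρ_ε)`, and let `P_ε` be the set of
nonzero primes of the ring of `S_ε`-integers of `K(ρ_ε)` (the integral closure
of `O` in `K(ρ_ε)`), of residue degree `1` over `K`, at which the residue of
`ε·A(ρ_ε)` is a nonzero nonsquare. Then
`δ(T_triv) ≤ Σ_{ε ∈ E} inf_F Π_{𝔭 ∈ F} (1 − 1/N(𝔭))`, the infimum being over
finite subsets `F` of `P_ε`. -/
theorem density_bound_trivial_specializations
    (K : Type*) [Field K] [NumberField K]
    (S : Finset (HeightOneSpectrum (𝓞 K)))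
    (hPID : IsPrincipalIdealRing (SInt K S))
    (f : Polynomial (𝓞 K)) (hmonic : f.Monic) (hsqfree : Squarefree f)
    (hodd : Odd f.natDegree) (hdeg : 3 ≤ f.natDegree)
    (δ : Set (SInt K S) → ℝ)
    (hδ01 : ∀ P, 0 ≤ δ P ∧ δ P ≤ 1)
    (hδuniv : δ Set.univ = 1)
    (hδmono : ∀ P Q, P ⊆ Q → δ P ≤ δ Q)
    (hδunion : ∀ P Q, δ (P ∪ Q) ≤ δ P + δ Q)
    (hδtrans : ∀ (α : SInt K S) (P : Set (SInt K S)), δ ((α + ·) '' P) = δ P)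
    (hδideal : ∀ I : Ideal (SInt K S), I ≠ ⊥ →
        δ (I : Set (SInt K S)) = 1 / (Nat.card (SInt K S ⧸ I) : ℝ))
    (A B C : Polynomial (SInt K S))
    (hrel : B ^ 2 - A * C = f.map (algebraMap (𝓞 K) (SInt K S)))
    (hprim : Ideal.span {A, 2 * B, C} = (⊤ : Ideal (Polynomial (SInt K S))))
    (hcop : IsCoprime (A.map (algebraMap (SInt K S) K)) (f.map (algebraMap (𝓞 K) K)))
    (hgenus : ¬ ∃ ε : K, ε ≠ 0 ∧ ∃ p : K[X],
        (f.map (algebraMap (𝓞 K) K)) ∣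
          (A.map (algebraMap (SInt K S) K) - Polynomial.C ε * p ^ 2))
    -- `E` is a finite set of representatives of `Oˣ/(Oˣ)²`
    (E : Finset (SInt K S)ˣ)
    (hEcomplete : ∀ u : (SInt K S)ˣ, ∃ ε ∈ E, ∃ v : (SInt K S)ˣ, u = ε * v ^ 2)
    (hEirred : ∀ ε₁ ∈ E, ∀ ε₂ ∈ E, (∃ v : (SInt K S)ˣ, ε₁ = ε₂ * v ^ 2) → ε₁ = ε₂)
    -- for each `ε ∈ E`, `ρ ε` is a root of `f` with `ε·A(ρ ε)` not a square in `K(ρ ε)`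
    (ρ : (SInt K S)ˣ → AlgebraicClosure K)
    (hρroot : ∀ ε ∈ E, aeval (ρ ε) (f.map (algebraMap (𝓞 K) K)) = 0)
    (hρnotsq : ∀ ε ∈ E, ¬ ∃ z : K⟮ρ ε⟯, z ^ 2 =
        algebraMap (SInt K S) K⟮ρ ε⟯ ((ε : (SInt K S)ˣ) : SInt K S)
          * aeval (AdjoinSimple.gen K (ρ ε)) A) :
    δ {n : SInt K S |
        ∃ M : Matrix (Fin 2) (Fin 2) (SInt K S), IsUnit M.det ∧
          ∀ x y : SInt K S,
            M.det * (A.eval n * x ^ 2 + 2 * B.eval n * x * y + C.eval n * y ^ 2) =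
              (M 0 0 * x + M 0 1 * y) ^ 2
                - (f.map (algebraMap (𝓞 K) (SInt K S))).eval n
                  * (M 1 0 * x + M 1 1 * y) ^ 2}
      ≤ ∑ ε ∈ E,
          ⨅ F : {F : Finset (Ideal (integralClosure (SInt K S) K⟮ρ ε⟯)) //
              ∀ 𝔭 ∈ F, 𝔭.IsPrime ∧ 𝔭 ≠ ⊥ ∧ 𝔭 ≠ ⊤ ∧
                -- residue degree 1 over `K`
                Nat.card ((integralClosure (SInt K S) K⟮ρ ε⟯) ⧸ 𝔭) =
                  Nat.card (SInt K S ⧸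
                    𝔭.comap (algebraMap (SInt K S) (integralClosure (SInt K S) K⟮ρ ε⟯))) ∧
                -- the residue of `ε·A(ρ ε)` mod `𝔭` is a nonzero nonsquare
                ∃ w : integralClosure (SInt K S) K⟮ρ ε⟯,
                  algebraMap (integralClosure (SInt K S) K⟮ρ ε⟯) K⟮ρ ε⟯ w =
                    algebraMap (SInt K S) K⟮ρ ε⟯ ((ε : (SInt K S)ˣ) : SInt K S)
                      * aeval (AdjoinSimple.gen K (ρ ε)) A ∧
                  Ideal.Quotient.mk 𝔭 w ≠ 0 ∧
                  ¬ ∃ t : integralClosure (SInt K S) K⟮ρ ε⟯,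
                    (Ideal.Quotient.mk 𝔭 t) ^ 2 = Ideal.Quotient.mk 𝔭 w},
            ∏ 𝔭 ∈ (F : Finset (Ideal (integralClosure (SInt K S) K⟮ρ ε⟯))),
              (1 - 1 / (Nat.card ((integralClosure (SInt K S) K⟮ρ ε⟯) ⧸ 𝔭) : ℝ)) := by
  classical
  have hδ : DB.IsDens δ := ⟨fun P ↦ (hδ01 P).1, hδmono, hδunion, hδtrans, hδideal⟩
  set fO := f.map (algebraMap (𝓞 K) (SInt K S)) with hfO
  have hzero : ∀ ε ∈ E, δ {n | ∃ s t, (ε : SInt K S) * A.eval n = s ^ 2 - fO.eval n * t ^ 2} = 0 := by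
    intro ε hε
    have hroot := hρroot ε hε
    rw [Polynomial.aeval_map_algebraMap] at hroot
    have hO_int : IsIntegral (𝓞 K) (ρ ε) := ⟨f, hmonic, hroot⟩
    have hK_int : IsIntegral K (ρ ε) := hO_int.tower_top
    have hZ_int : IsIntegral ℤ (ρ ε) := isIntegral_trans (R := ℤ) (A := 𝓞 K) _ hO_int
    have hfd : FiniteDimensional K K⟮ρ ε⟯ := IntermediateField.adjoin.finiteDimensional hK_int
    have hnf : NumberField K⟮ρ ε⟯ := NumberField.of_module_finite K K⟮ρ ε⟯
    have hgen : IsIntegral ℤ (AdjoinSimple.gen K (ρ ε)) := by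
      refine (isIntegral_algHom_iff ((algebraMap K⟮ρ ε⟯ (AlgebraicClosure K)).toIntAlgHom)
        (algebraMap K⟮ρ ε⟯ (AlgebraicClosure K)).injective).1 ?_
      exact hZ_int
    refine DB.main K S K⟮ρ ε⟯ δ hδ A fO ε (algebraMap (SInt K S) K⟮ρ ε⟯) rfl
      (AdjoinSimple.gen K (ρ ε)) hgen ?_ ?_
    · rw [hfO, Polynomial.eval₂_map]
      apply (algebraMap K⟮ρ ε⟯ (AlgebraicClosure K)).injective
      rw [Polynomial.hom_eval₂, map_zero]
      exact hroot
    · rintro ⟨z, hz⟩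
      exact hρnotsq ε hε ⟨z, by rw [pow_two, ← hz]; rfl⟩
  obtain ⟨ε₀, hε₀, -⟩ := hEcomplete 1
  have hsub : {n : SInt K S |
        ∃ M : Matrix (Fin 2) (Fin 2) (SInt K S), IsUnit M.det ∧
          ∀ x y : SInt K S,
            M.det * (A.eval n * x ^ 2 + 2 * B.eval n * x * y + C.eval n * y ^ 2) =
              (M 0 0 * x + M 0 1 * y) ^ 2
                - fO.eval n * (M 1 0 * x + M 1 1 * y) ^ 2} ⊆
      ⋃ ε ∈ E, {n | ∃ s t, (ε : SInt K S) * A.eval n = s ^ 2 - fO.eval n * t ^ 2} := by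
    rintro n ⟨M, hM, hn⟩
    obtain ⟨ε, hε, v, hv⟩ := hEcomplete hM.unit
    rw [Set.mem_iUnion₂]
    refine ⟨ε, hε, M 0 0 * ((v⁻¹ : (SInt K S)ˣ) : SInt K S),
      M 1 0 * ((v⁻¹ : (SInt K S)ˣ) : SInt K S), ?_⟩
    have h1 := hn 1 0
    have hdet : M.det = (ε : SInt K S) * (v : SInt K S) ^ 2 := by
      have := congrArg Units.val hv
      simpa using this
    rw [hdet] at h1
    have hvv : (v : SInt K S) * ((v⁻¹ : (SInt K S)ˣ) : SInt K S) = 1 := v.mul_inv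
    generalize ((v⁻¹ : (SInt K S)ˣ) : SInt K S) = u at hvv ⊢
    generalize (v : SInt K S) = v' at hvv h1
    linear_combination u ^ 2 * h1 - (ε : SInt K S) * A.eval n * (v' * u + 1) * hvv
  refine (hδmono _ _ hsub).trans ((hδ.biUnion E ⟨ε₀, hε₀⟩ _).trans ?_)
  refine Finset.sum_le_sum fun ε hε ↦ ?_
  rw [hzero ε hε]
  refine Real.iInf_nonneg fun F ↦ Finset.prod_nonneg fun 𝔭 _ ↦ ?_
  generalize Nat.card ((integralClosure (SInt K S) K⟮ρ ε⟯) ⧸ 𝔭) = N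
  rw [sub_nonneg]
  rw [one_div]
  exact Nat.cast_inv_le_one N
end
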